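/- arXiv:1309.5842 — 11 statements merged into one kernel-verified Lean document; each statement's English description precedes it below -/
import Mathlib

section
/- Let C ∈ M_n(ℂ) satisfy C · conj(C) = I, where conj(C) is the entrywise complex conjugate of C. Then there exists a matrix D ∈ M_n(ℂ) such that D² = C and D · conj(D) = I. -/
open Matrix

lemma nil_of_spec {n : ℕ} (N : Matrix (Fin n) (Fin n) ℂ) (h : ∀ z ∈ spectrum ℂ N, z = 0) :
    IsNilpotent N := by
  have h1 : N.charpoly.roots = Multiset.replicate N.charpoly.roots.card 0 := by
    rw [Multiset.eq_replicate]
    refine ⟨rfl, fun b hb => h b ?_⟩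
    rw [Matrix.mem_spectrum_iff_isRoot_charpoly]
    exact Polynomial.isRoot_of_mem_roots hb
  have h2 := (IsAlgClosed.splits N.charpoly).eq_prod_roots
  rw [h1, (Matrix.charpoly_monic N).leadingCoeff] at h2
  simp at h2
  have h3 := Matrix.aeval_self_charpoly N
  rw [h2] at h3
  exact ⟨_, by simpa using h3⟩

lemma exists_csqrt (z : ℂ) (hz : z ∈ Complex.slitPlane) : ∃ w : ℂ, w ^ 2 = z ∧ 0 < w.re := by
  obtain ⟨w, hw⟩ := IsAlgClosed.exists_pow_nat_eq z (n := 2) (by norm_num)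
  rcases lt_trichotomy w.re 0 with h | h | h
  · exact ⟨-w, by simpa using hw, by simpa using h⟩
  · exfalso
    rw [← hw, Complex.mem_slitPlane_iff] at hz
    simp [pow_two, h] at hz
    nlinarith [mul_self_nonneg w.im]
  · exact ⟨w, hw, h⟩

lemma exists_rot (s : Set ℂ) (hs : s.Finite) (h0 : (0:ℂ) ∉ s) :
    ∃ c : ℂ, c ^ 2 * star (c ^ 2) = 1 ∧ c * star c = 1 ∧ ∀ z ∈ s, c ^ 2 * z ∈ Complex.slitPlane := by
  have hinf : (Metric.sphere (0:ℂ) 1).Infinite := by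
    refine (isPreconnected_sphere (by simp) _ _).infinite_of_nontrivial ?_
    exact ⟨1, by simp, -1, by simp, by norm_num [Complex.ext_iff]⟩
  have hfin : ((fun z : ℂ => -(‖z‖ : ℂ) / z) '' s).Finite := hs.image _
  obtain ⟨d, hd, hd'⟩ := hinf.exists_notMem_finite hfin
  obtain ⟨c, rfl⟩ := IsAlgClosed.exists_pow_nat_eq d (n := 2) (by norm_num)
  have hc : ‖c‖ = 1 := by
    have : ‖c‖ ^ 2 = 1 := by simpa using hd
    nlinarith [norm_nonneg c]
  have hcc : c * star c = 1 := by
    have := Complex.mul_conj' c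
    simpa [hc] using this
  refine ⟨c, ?_, hcc, ?_⟩
  · rw [star_pow, ← mul_pow, hcc, one_pow]
  · intro z hz
    have hz0 : z ≠ 0 := fun h => h0 (h ▸ hz)
    rw [Complex.mem_slitPlane_iff_not_le_zero]
    intro hle
    apply hd'
    refine ⟨z, hz, ?_⟩
    have : c ^ 2 * z = -(‖z‖ : ℂ) := by
      have h1 : ‖c ^ 2 * z‖ = ‖z‖ := by rw [norm_mul, norm_pow, hc]; simp
      rw [← h1]
      generalize c ^ 2 * z = y at hle
      rw [Complex.le_def] at hle
      obtain ⟨hr, hi⟩ := hle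
      simp only [Complex.zero_re, Complex.zero_im] at hr hi
      have hy : y = (y.re : ℂ) := by apply Complex.ext <;> simp [hi]
      rw [hy, Complex.norm_real, Real.norm_of_nonpos hr]
      simp
    simp only
    rw [← this]; field_simp

lemma comm_unit {n : ℕ} (A B : Matrix (Fin n) (Fin n) ℂ) (hAB : Commute A B)
    (hA : ∀ z ∈ spectrum ℂ A, 0 < z.re) (hB : ∀ z ∈ spectrum ℂ B, 0 < z.re) : IsUnit (A * B + 1) := by
  by_contra hu
  rw [← Matrix.isUnit_toLin'_iff, LinearMap.isUnit_iff_ker_eq_bot] at hu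
  set K := LinearMap.ker (Matrix.toLin' (A * B + 1)) with hK
  have hinv : ∀ v ∈ K, Matrix.toLin' A v ∈ K := by
    intro v hv
    rw [hK, LinearMap.mem_ker, Matrix.toLin'_apply] at hv ⊢
    rw [Matrix.toLin'_apply, Matrix.mulVec_mulVec, (((Commute.refl A).mul_left hAB.symm).add_left (Commute.one_left A)).eq, ← Matrix.mulVec_mulVec, hv, Matrix.mulVec_zero]
  have : Nontrivial K := Submodule.nontrivial_iff_ne_bot.mpr hu
  obtain ⟨μ, hμ⟩ := Module.End.exists_eigenvalue ((Matrix.toLin' A).restrict hinv)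
  obtain ⟨v, hv⟩ := hμ.exists_hasEigenvector
  have hv0 : (v : Fin n → ℂ) ≠ 0 := by simpa using hv.2
  have h1 : A *ᵥ (v : Fin n → ℂ) = μ • (v : Fin n → ℂ) := by
    have := congrArg Subtype.val hv.apply_eq_smul
    simpa using this
  have key : ∀ (X : Matrix (Fin n) (Fin n) ℂ) (m : ℂ), X *ᵥ (v : Fin n → ℂ) = m • (v : Fin n → ℂ) → m ∈ spectrum ℂ X := by
    intro X m h
    rw [← Matrix.spectrum_toLin']
    exact (Module.End.hasEigenvalue_of_hasEigenvector (Module.End.hasEigenvector_iff.mpr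
      ⟨Module.End.mem_eigenspace_iff.mpr (by simpa using h), hv0⟩)).mem_spectrum
  have hμ := hA _ (key A μ h1)
  have hμ0 : μ ≠ 0 := by rintro rfl; simp at hμ
  have h2 : B *ᵥ (v : Fin n → ℂ) = (-μ⁻¹) • (v : Fin n → ℂ) := by
    have h3 : Matrix.toLin' (A * B + 1) (v : Fin n → ℂ) = 0 := v.2
    rw [Matrix.toLin'_apply, Matrix.add_mulVec, hAB.eq, ← Matrix.mulVec_mulVec, h1,
      Matrix.one_mulVec, Matrix.mulVec_smul] at h3
    have h4 := eq_neg_of_add_eq_zero_left h3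
    have h5 := congrArg (fun w => μ⁻¹ • w) h4
    simpa [smul_smul, hμ0] using h5
  have h6 := hB _ (key B _ h2)
  rw [Complex.neg_re, Complex.inv_re] at h6
  have : 0 ≤ μ.re / Complex.normSq μ := div_nonneg hμ.le (Complex.normSq_nonneg _)
  linarith

lemma exists_sqrt_poly {n : ℕ} (A : Matrix (Fin n) (Fin n) ℂ) (hne : (spectrum ℂ A).Nonempty)
    (hA : ∀ z ∈ spectrum ℂ A, z ∈ Complex.slitPlane) :
    ∃ E ∈ Algebra.adjoin ℂ {A}, E ^ 2 = A ∧ ∀ z ∈ spectrum ℂ E, 0 < z.re := by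
  classical
  have hf : ∀ z : ℂ, ∃ w : ℂ, z ∈ spectrum ℂ A → w ^ 2 = z ∧ 0 < w.re := by
    intro z
    by_cases hz : z ∈ spectrum ℂ A
    · obtain ⟨w, hw⟩ := exists_csqrt z (hA z hz)
      exact ⟨w, fun _ => hw⟩
    · exact ⟨0, fun h => absurd h hz⟩
  choose f hf using hf
  set q := Lagrange.interpolate (Matrix.finite_spectrum A).toFinset id f with hq
  have hqe : ∀ z ∈ spectrum ℂ A, q.eval z = f z := by
    intro z hz
    exact Lagrange.eval_interpolate_at_node (v := id) f (Set.injOn_id _) (by simpa using hz)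
  let a : Algebra.adjoin ℂ {A} := ⟨A, Algebra.self_mem_adjoin_singleton ℂ A⟩
  let x : Algebra.adjoin ℂ {A} := Polynomial.aeval a q
  have hx : (x : Matrix (Fin n) (Fin n) ℂ) = Polynomial.aeval A q := by
    simp [x, a, Polynomial.coe_aeval_mk_apply]
  have hxs : ∀ z ∈ spectrum ℂ (x : Matrix (Fin n) (Fin n) ℂ), 0 < z.re := by
    intro z hz
    rw [hx, spectrum.map_polynomial_aeval_of_nonempty _ _ hne] at hz
    obtain ⟨y, hy, rfl⟩ := hz
    simp only [hqe y hy]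
    exact (hf y hy).2
  have hnil : IsNilpotent (x ^ 2 - a) := by
    have h1 : IsNilpotent (Polynomial.aeval A (q ^ 2 - Polynomial.X)) := by
      apply nil_of_spec
      intro z hz
      rw [spectrum.map_polynomial_aeval_of_nonempty _ _ hne] at hz
      obtain ⟨y, hy, rfl⟩ := hz
      simp [hqe y hy, (hf y hy).1]
    obtain ⟨k, hk⟩ := h1
    refine ⟨k, Subtype.ext ?_⟩
    simpa [hx, a] using hk
  have hxu : IsUnit (x : Matrix (Fin n) (Fin n) ℂ) := by
    by_contra h
    have := hxs 0 (spectrum.zero_mem ℂ h)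
    simp at this
  have hxu' : IsUnit x := by
    have : IsArtinianRing (Algebra.adjoin ℂ {A}) := IsArtinianRing.of_finite ℂ _
    apply IsArtinianRing.isUnit_of_mem_nonZeroDivisors
    rw [mem_nonZeroDivisors_iff_right]
    intro y hy
    apply Subtype.ext
    have := congrArg Subtype.val hy
    exact hxu.mul_left_eq_zero.mp this
  have h2 : IsUnit (1 + 1 : Algebra.adjoin ℂ {A}) := by
    have h : IsUnit (algebraMap ℂ (Algebra.adjoin ℂ {A}) (1 + 1)) :=
      (IsUnit.mk0 (1 + 1 : ℂ) (by norm_num)).map _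
    rwa [map_add, map_one] at h
  obtain ⟨r, ⟨hr1, hr2⟩, -⟩ := Polynomial.existsUnique_nilpotent_sub_and_aeval_eq_zero
    (P := (Polynomial.X ^ 2 - Polynomial.C a)) (x := x) (by simpa using hnil)
    (by simpa [Polynomial.derivative_X_pow, one_add_one_eq_two] using h2.mul hxu')
  refine ⟨r, r.2, ?_, ?_⟩
  · have : r ^ 2 = a := by simpa [sub_eq_zero] using hr2
    exact congrArg Subtype.val this
  · intro z hz
    apply hxs
    rw [spectrum.mem_iff] at hz ⊢
    intro hu
    apply hz
    have hn : IsNilpotent ((x : Matrix (Fin n) (Fin n) ℂ) - r) := by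
      simpa using hr1.map (Algebra.adjoin ℂ {A}).val
    have hc : Commute (x : Matrix (Fin n) (Fin n) ℂ) r := congrArg Subtype.val (mul_comm x r)
    have := hn.isUnit_add_left_of_commute hu
      (Commute.sub_right (Algebra.commutes z _).symm
        ((Commute.refl _).sub_left hc.symm))
    simpa using this

/-- If `C ∈ Mₙ(ℂ)` satisfies `C ⬝ conj(C) = I`, then there exists `D ∈ Mₙ(ℂ)` with
`D² = C` and `D ⬝ conj(D) = I`, where `conj` is the entrywise complex conjugate. -/
theorem exists_sqrt_conj_inv {n : ℕ} (C : Matrix (Fin n) (Fin n) ℂ)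
    (hC : C * C.map (starRingEnd ℂ) = 1) :
    ∃ D : Matrix (Fin n) (Fin n) ℂ, D ^ 2 = C ∧ D * D.map (starRingEnd ℂ) = 1 := by
  rcases Nat.eq_zero_or_pos n with rfl | hn
  · exact ⟨1, Subsingleton.elim _ _, Subsingleton.elim _ _⟩
  have : Nonempty (Fin n) := ⟨⟨0, hn⟩⟩
  have h0 : (0:ℂ) ∉ spectrum ℂ C := by
    rw [spectrum.zero_notMem_iff]
    exact IsUnit.of_mul_eq_one _ hC
  obtain ⟨c, hc2, hc, hs⟩ := exists_rot _ (Matrix.finite_spectrum C) h0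
  have hc0 : c ≠ 0 := by rintro rfl; simp at hc
  let Φ : Matrix (Fin n) (Fin n) ℂ →+* Matrix (Fin n) (Fin n) ℂ := (starRingEnd ℂ).mapMatrix
  have hΦ : ∀ M, Φ M = M.map (starRingEnd ℂ) := fun M => rfl
  have hΦΦ : ∀ M, Φ (Φ M) = M := by intro M; ext i j; simp [hΦ]
  have hΦs : ∀ (z : ℂ) M, Φ (z • M) = star z • Φ M := by intro z M; ext i j; simp [hΦ]
  rw [← hΦ] at hC
  set A := c ^ 2 • C with hAdef
  have hAA : A * Φ A = 1 := by
    rw [hAdef, hΦs, smul_mul_smul_comm, hC, hc2, one_smul]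
  have hAs : ∀ z ∈ spectrum ℂ A, z ∈ Complex.slitPlane := by
    intro z hz
    rw [hAdef, spectrum.smul_eq_smul _ _ (spectrum.nonempty_of_isAlgClosed_of_finiteDimensional ℂ C)] at hz
    obtain ⟨y, hy, rfl⟩ := hz
    exact hs y hy
  obtain ⟨E, hE, hE2, hEs⟩ := exists_sqrt_poly A
    (spectrum.nonempty_of_isAlgClosed_of_finiteDimensional ℂ A) hAs
  have hcA : Commute A (Φ A) := by
    rw [Commute, SemiconjBy, hAA, mul_eq_one_comm.mp hAA]
  have h1 : Commute E (Φ A) := (Algebra.commute_of_mem_adjoin_singleton_of_commute hE hcA.symm).symm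
  have h2 : Commute (Φ E) A := by simpa [hΦΦ] using h1.map Φ
  have h3 : Commute E (Φ E) := (Algebra.commute_of_mem_adjoin_singleton_of_commute hE h2).symm
  have hFs : ∀ z ∈ spectrum ℂ (Φ E), 0 < z.re := by
    intro z hz
    have : star z ∈ spectrum ℂ E := by
      rw [spectrum.mem_iff] at hz ⊢
      intro hu
      apply hz
      have := hu.map Φ
      rwa [map_sub, Algebra.algebraMap_eq_smul_one, hΦs, star_star, map_one,
        ← Algebra.algebraMap_eq_smul_one] at this
    simpa using hEs _ this
  have hu := comm_unit E (Φ E) h3 hEs hFs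
  have hX : (E * Φ E) * (E * Φ E) = 1 := by
    rw [← pow_two, h3.mul_pow, ← map_pow, hE2, hAA]
  have hEE : E * Φ E = 1 := by
    have : (E * Φ E - 1) * (E * Φ E + 1) = 0 := by
      rw [sub_mul, mul_add, hX, mul_one, one_mul]; abel
    exact sub_eq_zero.mp (hu.mul_left_eq_zero.mp this)
  refine ⟨star c • E, ?_, ?_⟩
  · rw [smul_pow, hE2, hAdef, smul_smul, ← mul_pow, mul_comm, hc]; simp
  · rw [← hΦ, hΦs, smul_mul_smul_comm, hEE, star_star, mul_comm, hc, one_smul]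
end

section
/- (Fong–Sourour) Let A_j, B_j ∈ M_n(ℂ) for j = 1, …, m, and assume the set {B_1, …, B_m} is linearly independent. Define the linear map Φ : M_n(ℂ) → M_n(ℂ) by Φ(X) = Σ_{j=1}^m A_j X B_j. Then Φ is identically zero if and only if A_j = 0 for all j. -/
open Matrix

/-- (Fong–Sourour) If `{B₁,…,Bₘ}` is linearly independent in `Mₙ(ℂ)` and
`Φ(X) = ∑ⱼ Aⱼ X Bⱼ`, then `Φ ≡ 0` iff `Aⱼ = 0` for all `j`. -/
theorem fong_sourour_indep {n m : ℕ}
    (A B : Fin m → Matrix (Fin n) (Fin n) ℂ)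
    (hB : LinearIndependent ℂ B) :
    (∀ X : Matrix (Fin n) (Fin n) ℂ, ∑ j, A j * X * B j = 0) ↔ ∀ j, A j = 0 := by
  constructor
  · intro h j
    ext p k
    refine Fintype.linearIndependent_iff.mp hB (fun j => A j p k) ?_ j
    ext l q
    have h1 := congrFun (congrFun (h (Matrix.single k l 1)) p) q
    have h2 : ∀ j, (A j * Matrix.single k l (1 : ℂ) * B j) p q = A j p k * B j l q := by
      intro j
      rw [Matrix.mul_assoc, Matrix.mul_apply, Finset.sum_eq_single k]
      · simp
      · intro b _ hb
        rw [Matrix.single_mul_apply_of_ne _ _ _ _ _ hb, mul_zero]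
      · simp
    simpa [Matrix.sum_apply, h2] using h1
  · intro h X
    simp [h]
end

section
/- (Fong–Sourour) Let A_j, B_j ∈ M_n(ℂ) for j = 1, …, m. Assume that for some s < m the set {B_1, …, B_s} is linearly independent and spans the linear span of {B_1, …, B_m}, and write B_j = Σ_{k=1}^s c_{k,j} B_k for constants c_{k,j} ∈ ℂ and s+1 ≤ j ≤ m. Define Φ : M_n(ℂ) → M_n(ℂ) by Φ(X) = Σ_{j=1}^m A_j X B_j. Then Φ is identically zero if and only if A_k = − Σ_{j=s+1}^m c_{k,j} A_j for all 1 ≤ k ≤ s. -/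
open Matrix

theorem fs_split {M : Type*} [AddCommMonoid M] {m s : ℕ} (hs : s < m) (f : Fin m → M) :
    ∑ j, f j = ∑ k : Fin s, f (Fin.castLE hs.le k) +
      ∑ j ∈ Finset.univ.filter (fun j : Fin m => s ≤ (j : ℕ)), f j := by
  rw [← Finset.sum_filter_add_sum_filter_not Finset.univ (fun j : Fin m => s ≤ (j : ℕ)), add_comm]
  congr 1
  symm
  refine Finset.sum_bij (fun k _ => Fin.castLE hs.le k) ?_ ?_ ?_ ?_
  · intro k _
    simp
  · intro a _ b _ h
    simpa using h
  · intro b hb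
    simp at hb
    exact ⟨⟨b, hb⟩, Finset.mem_univ _, rfl⟩
  · intros
    rfl

theorem fs_indep {n s : ℕ} (D B : Fin s → Matrix (Fin n) (Fin n) ℂ)
    (hind : LinearIndependent ℂ B)
    (h : ∀ X : Matrix (Fin n) (Fin n) ℂ, ∑ k, D k * X * B k = 0) (k : Fin s) : D k = 0 := by
  ext i p
  refine Fintype.linearIndependent_iff.1 hind (fun k => D k i p) ?_ k
  ext q l
  have h1 := congrFun (congrFun (h (Matrix.single p q 1)) i) l
  rw [Matrix.sum_apply] at h1 ⊢
  refine Eq.trans ?_ h1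
  refine Finset.sum_congr rfl fun k _ => ?_
  rw [Matrix.mul_apply, Finset.sum_eq_single q]
  · simp
  · intro b _ hb
    simp [hb.symm, hb]
  · simp

/-- (Fong–Sourour) Suppose `{B₁,…,Bₛ}` is linearly independent (`s < m`) and
`Bⱼ = ∑_{k=1}^s c_{k,j} B_k` for `s+1 ≤ j ≤ m`.  With `Φ(X) = ∑ⱼ Aⱼ X Bⱼ`,
`Φ ≡ 0` iff `A_k = −∑_{j=s+1}^m c_{k,j} Aⱼ` for all `1 ≤ k ≤ s`. -/
theorem fong_sourour_dep {n m s : ℕ} (hs : s < m)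
    (A B : Fin m → Matrix (Fin n) (Fin n) ℂ)
    (c : Fin s → Fin m → ℂ)
    (hind : LinearIndependent ℂ (fun k : Fin s => B (Fin.castLE hs.le k)))
    (hcomb : ∀ j : Fin m, s ≤ (j : ℕ) →
      B j = ∑ k : Fin s, c k j • B (Fin.castLE hs.le k)) :
    (∀ X : Matrix (Fin n) (Fin n) ℂ, ∑ j, A j * X * B j = 0) ↔
      (∀ k : Fin s, A (Fin.castLE hs.le k) =
        -∑ j ∈ Finset.univ.filter (fun j : Fin m => s ≤ (j : ℕ)), c k j • A j) := by
  have key : ∀ X : Matrix (Fin n) (Fin n) ℂ, ∑ j, A j * X * B j =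
      ∑ k : Fin s, (A (Fin.castLE hs.le k) +
        ∑ j ∈ Finset.univ.filter (fun j : Fin m => s ≤ (j : ℕ)), c k j • A j) * X *
          B (Fin.castLE hs.le k) := by
    intro X
    rw [fs_split hs]
    simp only [add_mul, Finset.sum_add_distrib, Finset.sum_mul]
    congr 1
    rw [Finset.sum_comm]
    refine Finset.sum_congr rfl fun j hj => ?_
    rw [hcomb j (Finset.mem_filter.1 hj).2, Finset.mul_sum]
    refine Finset.sum_congr rfl fun k _ => ?_
    simp
  constructor
  · intro h k
    rw [eq_neg_iff_add_eq_zero]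
    exact fs_indep (fun k => A (Fin.castLE hs.le k) +
        ∑ j ∈ Finset.univ.filter (fun j : Fin m => s ≤ (j : ℕ)), c k j • A j) _ hind
      (fun X => (key X).symm.trans (h X)) k
  · intro h X
    rw [key]
    refine Finset.sum_eq_zero fun k _ => ?_
    rw [eq_neg_iff_add_eq_zero.1 (h k)]
    simp
end

section
/- Let A_j, B_j ∈ M_n(ℂ) for j = 1, …, m, with {A_1, …, A_m} linearly independent and {B_1, …, B_m} linearly independent. Assume Σ_{j=1}^m A_j X B_j = Σ_{j=1}^m A_j* X B_j* for all X ∈ M_n(ℂ). Then there exist constants c_{k,j} ∈ ℂ such that A_k* = Σ_{j=1}^m conj(c_{k,j}) A_j and B_k* = Σ_{j=1}^m c_{j,k} B_j for every k = 1, …, m. -/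
open Matrix

/-- If `{A₁,…,Aₘ}` and `{B₁,…,Bₘ}` are linearly independent in `Mₙ(ℂ)` and
`∑ⱼ Aⱼ X Bⱼ = ∑ⱼ Aⱼ* X Bⱼ*` for all `X`, then there are constants `c_{k,j}` with
`A_k* = ∑ⱼ conj(c_{k,j}) Aⱼ` and `B_k* = ∑ⱼ c_{j,k} Bⱼ` for every `k`. -/
theorem adjoints_in_span {n m : ℕ}
    (A B : Fin m → Matrix (Fin n) (Fin n) ℂ)
    (hA : LinearIndependent ℂ A) (hB : LinearIndependent ℂ B)
    (h : ∀ X : Matrix (Fin n) (Fin n) ℂ,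
      ∑ j, A j * X * B j = ∑ j, (A j)ᴴ * X * (B j)ᴴ) :
    ∃ c : Fin m → Fin m → ℂ,
      (∀ k, (A k)ᴴ = ∑ j, starRingEnd ℂ (c k j) • A j) ∧
      (∀ k, (B k)ᴴ = ∑ j, c j k • B j) := by
  have ent : ∀ p q r s, ∑ j, A j p q * B j r s = ∑ j, (A j)ᴴ p q * (B j)ᴴ r s := by
    intro p q r s
    have := congrFun (congrFun (h (Matrix.single q r 1)) p) s
    simp only [Matrix.sum_apply] at this
    have e : ∀ M N : Matrix (Fin n) (Fin n) ℂ,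
        (M * Matrix.single q r (1 : ℂ) * N) p s = M p q * N r s := by
      intro M N
      simp [Matrix.mul_apply, Matrix.single_apply, Finset.sum_ite_eq, ite_and]
    simpa only [e] using this
  obtain ⟨G, hG⟩ := LinearMap.exists_leftInverse_of_injective (Fintype.linearCombination ℂ B)
    (LinearMap.ker_eq_bot.mpr (hB.fintypeLinearCombination_injective))
  have hGB : ∀ j k, G (B j) k = if j = k then 1 else 0 := by
    intro j k
    have := congrFun (LinearMap.congr_fun hG (Pi.single j 1)) k
    simpa [Pi.single_apply, eq_comm] using this
  have hAs : ∀ k, (A k)ᴴ = ∑ j, starRingEnd ℂ (G ((B j)ᴴ) k) • A j := by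
    intro k
    ext p q
    have hm : ∑ j, starRingEnd ℂ (A j p q) • (B j)ᴴ
        = ∑ j, starRingEnd ℂ ((A j)ᴴ p q) • B j := by
      ext r s
      have := congrArg (starRingEnd ℂ) (ent p q s r)
      simpa [Matrix.sum_apply] using this
    have h2 := congrArg (starRingEnd ℂ) (congrFun (congrArg G hm) k)
    simp only [map_sum, map_smul, Finset.sum_apply, Pi.smul_apply, hGB, smul_eq_mul, map_mul,
      Complex.conj_conj] at h2
    simp only [Matrix.sum_apply, Matrix.smul_apply, smul_eq_mul]
    simp only [mul_comm _ (A _ p q), h2]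
    simp
  refine ⟨fun k j => G ((B j)ᴴ) k, hAs, ?_⟩
  intro k
  ext r s
  have hz : ∑ j, (B j s r - ∑ i, starRingEnd ℂ (G ((B j)ᴴ) i) * (B i)ᴴ s r) • A j = 0 := by
    ext p q
    have h1 := ent p q s r
    simp only [hAs, Matrix.sum_apply, Matrix.smul_apply, smul_eq_mul, Finset.sum_mul] at h1
    rw [Finset.sum_comm] at h1
    simp only [Matrix.sum_apply, Matrix.smul_apply, smul_eq_mul, sub_mul, Finset.sum_sub_distrib,
      Finset.sum_mul, Matrix.zero_apply, sub_eq_zero]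
    simp only [mul_comm (B _ s r), h1]
    refine Finset.sum_congr rfl fun _ _ => Finset.sum_congr rfl fun _ _ => by ring
  have h3 := congrArg (starRingEnd ℂ)
    (sub_eq_zero.mp (Fintype.linearIndependent_iff.mp hA _ hz k))
  simpa [Matrix.sum_apply] using h3
end

section
/- Let 𝒜 : M_n(ℂ) → M_n(ℂ) be defined by 𝒜(X) = Σ_{j=1}^m E_j X F_j, where the sets {E_1, …, E_m} and {F_1, …, F_m} are each linearly independent in M_n(ℂ). If ⟨𝒜(X), Y⟩ = ⟨X, 𝒜(Y)⟩ for all X, Y ∈ M_n(ℂ) (Frobenius inner product), then there exist Hermitian matrices A_j, B_j ∈ M_n(ℂ), j = 1, …, m, such that 𝒜(X) = Σ_{j=1}^m A_j X B_j for all X ∈ M_n(ℂ); moreover the sets {A_1, …, A_m} and {B_1, …, B_m} are linearly independent. -/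
open Matrix

theorem aux_entries {n m : ℕ} (E F G H : Fin m → Matrix (Fin n) (Fin n) ℂ)
    (h : ∀ X : Matrix (Fin n) (Fin n) ℂ, ∑ j, E j * X * F j = ∑ j, G j * X * H j)
    (a b c d : Fin n) : ∑ j, E j a b * F j c d = ∑ j, G j a b * H j c d := by
  have h1 := congrFun (congrFun (h (Matrix.single b c 1)) a) d
  have key : ∀ P Q : Matrix (Fin n) (Fin n) ℂ,
      (P * Matrix.single b c (1:ℂ) * Q) a d = P a b * Q c d := by
    intro P Q
    rw [Matrix.mul_assoc, Matrix.mul_apply, Finset.sum_eq_single b]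
    · simp
    · intro k _ hk
      rw [Matrix.single_mul_apply_of_ne (h := hk)]
      simp
    · simp
  simpa [Matrix.sum_apply, key] using h1

theorem aux_span {n m : ℕ} (E F G H : Fin m → Matrix (Fin n) (Fin n) ℂ)
    (hF : LinearIndependent ℂ F)
    (h : ∀ a b c d, ∑ j, E j a b * F j c d = ∑ j, G j a b * H j c d) (i : Fin m) :
    E i ∈ Submodule.span ℂ (Set.range G) := by
  have hinj : LinearMap.ker (Fintype.linearCombination ℂ F) = ⊥ :=
    LinearMap.ker_eq_bot.2 (linearIndependent_iff_injective_fintypeLinearCombination.1 hF)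
  obtain ⟨g, hg⟩ := LinearMap.exists_leftInverse_of_injective _ hinj
  have hgF : ∀ j, g (F j) = Pi.single j 1 := by
    intro j
    have := LinearMap.congr_fun hg (Pi.single j 1)
    simpa using this
  have : E i = ∑ j, g (H j) i • G j := by
    ext a b
    have h1 : ∑ j, E j a b • F j = ∑ j, G j a b • H j := by
      ext c d
      simpa [Matrix.sum_apply] using h a b c d
    have h2 := congrFun (congrArg g h1) i
    simp only [map_sum, map_smul, Finset.sum_apply, Pi.smul_apply, hgF, smul_eq_mul] at h2
    simp only [Matrix.sum_apply, Matrix.smul_apply, smul_eq_mul]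
    simp only [Pi.single_apply, mul_ite, mul_one, mul_zero, Finset.sum_ite_eq,
      Finset.mem_univ, if_true] at h2
    rw [h2]
    exact Finset.sum_congr rfl fun j _ => mul_comm _ _
  rw [this]
  exact Submodule.sum_mem _ fun j _ => Submodule.smul_mem _ _ (Submodule.subset_span ⟨j, rfl⟩)

theorem aux_star {n m : ℕ} (E F : Fin m → Matrix (Fin n) (Fin n) ℂ)
    (h : ∀ X Y : Matrix (Fin n) (Fin n) ℂ,
      Matrix.trace (Yᴴ * ∑ j, E j * X * F j)
        = Matrix.trace ((∑ j, E j * Y * F j)ᴴ * X)) (X : Matrix (Fin n) (Fin n) ℂ) :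
    ∑ j, E j * X * F j = ∑ j, (E j)ᴴ * X * (F j)ᴴ := by
  apply Matrix.ext_iff_trace_mul_left.2
  intro Z
  have h1 := h X Zᴴ
  rw [Matrix.conjTranspose_conjTranspose] at h1
  rw [h1, Matrix.conjTranspose_sum, Finset.sum_mul, Finset.mul_sum, Matrix.trace_sum,
    Matrix.trace_sum]
  refine Finset.sum_congr rfl fun j _ => ?_
  simp only [Matrix.conjTranspose_mul, Matrix.conjTranspose_conjTranspose]
  rw [Matrix.mul_assoc, Matrix.trace_mul_comm]
  simp only [Matrix.mul_assoc]

theorem aux_basis {n m : ℕ} (E : Fin m → Matrix (Fin n) (Fin n) ℂ)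
    (hE : LinearIndependent ℂ E)
    (hs : ∀ j, (E j)ᴴ ∈ Submodule.span ℂ (Set.range E)) :
    ∃ A : Fin m → Matrix (Fin n) (Fin n) ℂ, (∀ j, (A j).IsHermitian) ∧
      LinearIndependent ℂ A ∧
      Submodule.span ℂ (Set.range A) = Submodule.span ℂ (Set.range E) := by
  set V := Submodule.span ℂ (Set.range E) with hV
  let S : Set (Matrix (Fin n) (Fin n) ℂ) := {M | M ∈ V ∧ M.IsHermitian}
  have hEV : ∀ j, E j ∈ V := fun j => Submodule.subset_span ⟨j, rfl⟩
  have hS : Submodule.span ℂ S = V := by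
    apply le_antisymm
    · exact Submodule.span_le.2 fun M hM => hM.1
    · rw [hV, Submodule.span_le]
      rintro _ ⟨j, rfl⟩
      have h1 : E j + (E j)ᴴ ∈ S := by
        refine ⟨V.add_mem (hEV j) (hs j), ?_⟩
        simp [Matrix.IsHermitian, add_comm]
      have h2 : Complex.I • (E j - (E j)ᴴ) ∈ S := by
        refine ⟨V.smul_mem _ (V.sub_mem (hEV j) (hs j)), ?_⟩
        simp [Matrix.IsHermitian, Matrix.conjTranspose_smul, ← smul_neg]
      have h3 : E j = (1/2 : ℂ) • (E j + (E j)ᴴ)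
          + (-Complex.I/2) • (Complex.I • (E j - (E j)ᴴ)) := by
        rw [smul_smul]
        have : -Complex.I/2 * Complex.I = 1/2 := by
          linear_combination (-1/2) * Complex.I_mul_I
        rw [this, ← smul_add]
        ext a b
        simp
        ring
      rw [SetLike.mem_coe, h3]
      exact Submodule.add_mem _ (Submodule.smul_mem _ _ (Submodule.subset_span h1))
        (Submodule.smul_mem _ _ (Submodule.subset_span h2))
  obtain ⟨b, hbS, hbspan, hb⟩ := exists_linearIndependent ℂ S
  have hfin : Finite b := hb.finite
  have := Fintype.ofFinite b
  have hc : Fintype.card b = m := by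
    have h1 := finrank_span_eq_card hb
    have h2 := finrank_span_eq_card hE
    rw [Subtype.range_coe, hbspan, hS] at h1
    rw [← h1, hV, h2, Fintype.card_fin]
  let e : Fin m ≃ b := (Fintype.equivFinOfCardEq hc).symm
  refine ⟨fun j => (e j : Matrix (Fin n) (Fin n) ℂ), fun j => (hbS (e j).2).2,
    hb.comp e e.injective, ?_⟩
  have : Set.range (fun j => (e j : Matrix (Fin n) (Fin n) ℂ)) = b := by
    have := e.surjective.range_comp (Subtype.val : b → Matrix (Fin n) (Fin n) ℂ)
    rw [Subtype.range_coe] at this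
    exact this
  rw [this, hbspan, hS]

/-- If `𝒜(X) = ∑ⱼ Eⱼ X Fⱼ` with `{E₁,…,Eₘ}` and `{F₁,…,Fₘ}` linearly independent,
and `𝒜` is self-adjoint for the Frobenius inner product, then there exist Hermitian
matrices `Aⱼ, Bⱼ` with `𝒜(X) = ∑ⱼ Aⱼ X Bⱼ`, and moreover `{A₁,…,Aₘ}` and
`{B₁,…,Bₘ}` are linearly independent. -/
theorem selfadjoint_hermitian_decomposition {n m : ℕ}
    (E F : Fin m → Matrix (Fin n) (Fin n) ℂ)
    (hE : LinearIndependent ℂ E) (hF : LinearIndependent ℂ F)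
    (h : ∀ X Y : Matrix (Fin n) (Fin n) ℂ,
      Matrix.trace (Yᴴ * ∑ j, E j * X * F j)
        = Matrix.trace ((∑ j, E j * Y * F j)ᴴ * X)) :
    ∃ A B : Fin m → Matrix (Fin n) (Fin n) ℂ,
      (∀ j, (A j).IsHermitian) ∧ (∀ j, (B j).IsHermitian) ∧
      (∀ X : Matrix (Fin n) (Fin n) ℂ, ∑ j, E j * X * F j = ∑ j, A j * X * B j) ∧
      LinearIndependent ℂ A ∧ LinearIndependent ℂ B := by
  have hstar := aux_star E F h
  have hF' : LinearIndependent ℂ (fun j => (F j)ᴴ) := by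
    rw [Fintype.linearIndependent_iff] at hF ⊢
    intro g hg i
    have h1 := congrArg Matrix.conjTranspose hg
    simp only [Matrix.conjTranspose_sum, Matrix.conjTranspose_smul,
      Matrix.conjTranspose_conjTranspose, Matrix.conjTranspose_zero] at h1
    simpa using hF (fun j => star (g j)) h1 i
  have hs : ∀ j, (E j)ᴴ ∈ Submodule.span ℂ (Set.range E) := fun j =>
    aux_span (fun j => (E j)ᴴ) (fun j => (F j)ᴴ) E F hF'
      (aux_entries _ _ _ _ fun X => (hstar X).symm) j
  obtain ⟨A, hA, hAi, hAs⟩ := aux_basis E hE hs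
  have hc : ∀ j, ∃ c : Fin m → ℂ, ∑ k, c k • A k = E j := by
    intro j
    have : E j ∈ Submodule.span ℂ (Set.range A) := hAs ▸ Submodule.subset_span ⟨j, rfl⟩
    exact (Submodule.mem_span_range_iff_exists_fun ℂ).1 this
  choose c hc using hc
  let B : Fin m → Matrix (Fin n) (Fin n) ℂ := fun k => ∑ j, c j k • F j
  have hAB : ∀ X : Matrix (Fin n) (Fin n) ℂ, ∑ j, E j * X * F j = ∑ j, A j * X * B j := by
    intro X
    simp only [B, Finset.mul_sum]
    rw [Finset.sum_comm]
    refine Finset.sum_congr rfl fun j _ => ?_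
    rw [← hc j, Finset.sum_mul, Finset.sum_mul]
    refine Finset.sum_congr rfl fun k _ => ?_
    simp
  refine ⟨A, B, hA, ?_, hAB, hAi, ?_⟩
  · have hAB' : ∀ X : Matrix (Fin n) (Fin n) ℂ,
        ∑ j, A j * X * B j = ∑ j, A j * X * (B j)ᴴ := by
      intro X
      rw [← hAB, hstar]
      have hcs : ∀ j, ∑ k, star (c j k) • A k = (E j)ᴴ := by
        intro j
        rw [← hc j, Matrix.conjTranspose_sum]
        refine Finset.sum_congr rfl fun k _ => ?_
        rw [Matrix.conjTranspose_smul, (hA k).eq]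
      simp only [B, Matrix.conjTranspose_sum, Matrix.conjTranspose_smul, Finset.mul_sum]
      rw [Finset.sum_comm]
      refine Finset.sum_congr rfl fun j _ => ?_
      rw [← hcs j, Finset.sum_mul, Finset.sum_mul]
      refine Finset.sum_congr rfl fun k _ => ?_
      simp
    have hent := aux_entries _ _ _ _ hAB'
    intro k
    ext x y
    rw [Fintype.linearIndependent_iff] at hAi
    have h0 : ∑ j, (B j x y - (B j)ᴴ x y) • A j = 0 := by
      ext a b
      have := hent a b x y
      simp only [Matrix.sum_apply, Matrix.smul_apply, smul_eq_mul, sub_mul,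
        Finset.sum_sub_distrib, Matrix.zero_apply]
      rw [sub_eq_zero]
      simpa only [mul_comm] using this
    exact (sub_eq_zero.1 (hAi _ h0 k)).symm
  · have hent := aux_entries _ _ _ _ hAB
    have hle : Submodule.span ℂ (Set.range F) ≤ Submodule.span ℂ (Set.range B) := by
      rw [Submodule.span_le]
      rintro _ ⟨i, rfl⟩
      refine aux_span F E B A hE (fun a b x y => ?_) i
      simpa only [mul_comm] using hent x y a b
    rw [linearIndependent_iff_card_le_finrank_span]
    have := Submodule.finrank_mono hle
    rw [finrank_span_eq_card hF] at this
    exact this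
end

section
/- Let 𝒜 : M_n(ℂ) → M_n(ℂ) be given by 𝒜(X) = A X B with A, B ∈ M_n(ℂ) Hermitian. If ⟨𝒜(X), X⟩ > 0 for all nonzero X ∈ M_n(ℂ) (Frobenius inner product), then there exist positive matrices A', B' ∈ M_n(ℂ) such that 𝒜(X) = A' X B' for all X ∈ M_n(ℂ). -/
open Matrix ComplexOrder

theorem aux_trace {n : ℕ} (A B : Matrix (Fin n) (Fin n) ℂ) (x y : Fin n → ℂ) :
    Matrix.trace ((vecMulVec x (star y))ᴴ * (A * vecMulVec x (star y) * B)) =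
      (star x ⬝ᵥ (A *ᵥ x)) * (star y ⬝ᵥ (B *ᵥ y)) := by
  rw [conjTranspose_vecMulVec, star_star, mul_vecMulVec, vecMulVec_mul (A *ᵥ x), vecMulVec_mul_vecMulVec,
    trace_vecMulVec, dotProduct_smul, smul_eq_mul, dotProduct_comm y, ← dotProduct_mulVec]

theorem aux_real {n : ℕ} {A : Matrix (Fin n) (Fin n) ℂ} (hA : A.IsHermitian) (x : Fin n → ℂ) :
    (star x ⬝ᵥ (A *ᵥ x)).im = 0 := by
  have := hA.im_star_dotProduct_mulVec_self x
  simpa using this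

theorem aux_pos {n : ℕ} {A : Matrix (Fin n) (Fin n) ℂ} (hA : A.IsHermitian)
    (h : ∀ x : Fin n → ℂ, x ≠ 0 → 0 < (star x ⬝ᵥ (A *ᵥ x)).re) : A.PosDef := by
  refine PosDef.of_dotProduct_mulVec_pos hA fun x hx => ?_
  rw [Complex.lt_def]
  exact ⟨by simpa using h x hx, by simpa using (aux_real hA x).symm⟩

/-- If `𝒜(X) = A X B` with `A, B` Hermitian and `⟨𝒜(X), X⟩ = trace(Xᴴ A X B)` is a
positive real for every nonzero `X`, then there exist positive matrices `A', B'`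
with `A X B = A' X B'` for all `X`. -/
theorem one_summand_positive {n : ℕ}
    (A B : Matrix (Fin n) (Fin n) ℂ)
    (hA : A.IsHermitian) (hB : B.IsHermitian)
    (h : ∀ X : Matrix (Fin n) (Fin n) ℂ, X ≠ 0 →
      (Matrix.trace (Xᴴ * (A * X * B))).im = 0 ∧
      0 < (Matrix.trace (Xᴴ * (A * X * B))).re) :
    ∃ A' B' : Matrix (Fin n) (Fin n) ℂ, A'.PosDef ∧ B'.PosDef ∧
      ∀ X : Matrix (Fin n) (Fin n) ℂ, A * X * B = A' * X * B' := by
  have key : ∀ x y : Fin n → ℂ, x ≠ 0 → y ≠ 0 →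
      0 < (star x ⬝ᵥ (A *ᵥ x)).re * (star y ⬝ᵥ (B *ᵥ y)).re := by
    intro x y hx hy
    have hX : vecMulVec x (star y) ≠ 0 := by
      obtain ⟨i, hi⟩ := Function.ne_iff.mp hx
      obtain ⟨j, hj⟩ := Function.ne_iff.mp hy
      intro h0
      have := congrFun (congrFun h0 i) j
      simp only [vecMulVec_apply, Pi.star_apply, Matrix.zero_apply, mul_eq_zero, star_eq_zero] at this
      exact this.elim hi hj
    have h2 := (h _ hX).2
    rw [aux_trace, Complex.mul_re, aux_real hA, aux_real hB] at h2
    simpa using h2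
  by_cases hpos : ∀ x : Fin n → ℂ, x ≠ 0 → 0 < (star x ⬝ᵥ (A *ᵥ x)).re
  · refine ⟨A, B, aux_pos hA hpos, aux_pos hB fun y hy => ?_, fun X => rfl⟩
    exact (pos_iff_pos_of_mul_pos (key y y hy hy)).mp (hpos y hy)
  · push Not at hpos
    obtain ⟨x, hx, hle⟩ := hpos
    have hBn : ∀ y : Fin n → ℂ, y ≠ 0 → (star y ⬝ᵥ (B *ᵥ y)).re < 0 := fun y hy => by
      by_contra hc
      nlinarith [key x y hx hy]
    have hAn : ∀ y : Fin n → ℂ, y ≠ 0 → (star y ⬝ᵥ (A *ᵥ y)).re < 0 := fun y hy => by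
      by_contra hc
      nlinarith [key y y hy hy, hBn y hy]
    refine ⟨-A, -B, aux_pos hA.neg fun y hy => ?_, aux_pos hB.neg fun y hy => ?_, fun X => by simp⟩
    · simpa [neg_mulVec] using hAn y hy
    · simpa [neg_mulVec] using hBn y hy
end

section
/- Let 𝒜 : M_n(ℂ) → M_n(ℂ) be given by 𝒜(X) = A_1 X B_1 + A_2 X B_2 with A_1, A_2, B_1, B_2 ∈ M_n(ℂ) Hermitian. If ⟨𝒜(X), X⟩ > 0 for all nonzero X ∈ M_n(ℂ) (Frobenius inner product), then there exist positive matrices A_1', A_2', B_1', B_2' ∈ M_n(ℂ) such that 𝒜(X) = A_1' X B_1' + A_2' X B_2' for all X ∈ M_n(ℂ). -/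
open Matrix ComplexOrder

/-- real quadratic form -/
noncomputable def qf {n : ℕ} (A : Matrix (Fin n) (Fin n) ℂ) (x : Fin n → ℂ) : ℝ :=
  (star x ⬝ᵥ A *ᵥ x).re

lemma qf_add {n : ℕ} (A B : Matrix (Fin n) (Fin n) ℂ) (x : Fin n → ℂ) :
    qf (A + B) x = qf A x + qf B x := by
  simp [qf, add_mulVec, dotProduct_add]

lemma qf_neg {n : ℕ} (A : Matrix (Fin n) (Fin n) ℂ) (x : Fin n → ℂ) :
    qf (-A) x = - qf A x := by
  simp [qf, neg_mulVec]

lemma qf_smul {n : ℕ} (c : ℝ) (A : Matrix (Fin n) (Fin n) ℂ) (x : Fin n → ℂ) :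
    qf (c • A) x = c * qf A x := by
  simp [qf, smul_mulVec]

lemma qf_vec {n : ℕ} (c : ℝ) (A : Matrix (Fin n) (Fin n) ℂ) (x : Fin n → ℂ) :
    qf A (c • x) = c ^ 2 * qf A x := by
  have : star (c • x) = c • star x := by ext i; simp
  simp only [qf, this, mulVec_smul, dotProduct_smul, smul_dotProduct]
  simp
  ring

lemma qf_im {n : ℕ} {A : Matrix (Fin n) (Fin n) ℂ} (hA : A.IsHermitian) (x : Fin n → ℂ) :
    star x ⬝ᵥ A *ᵥ x = (qf A x : ℂ) := by
  apply Complex.ext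
  · simp [qf]
  · simpa using hA.im_star_dotProduct_mulVec_self x

lemma posDef_of_qf {n : ℕ} {A : Matrix (Fin n) (Fin n) ℂ} (hA : A.IsHermitian)
    (h : ∀ x, x ≠ 0 → 0 < qf A x) : A.PosDef := by
  refine PosDef.of_dotProduct_mulVec_pos hA fun x hx => ?_
  rw [qf_im hA]
  exact_mod_cast h x hx

lemma qf_pos {n : ℕ} {A : Matrix (Fin n) (Fin n) ℂ} (hA : A.PosDef)
    {x : Fin n → ℂ} (hx : x ≠ 0) : 0 < qf A x := by
  have := hA.dotProduct_mulVec_pos hx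
  rw [qf_im hA.isHermitian] at this
  exact_mod_cast this

lemma herm_smul {n : ℕ} {A : Matrix (Fin n) (Fin n) ℂ} (hA : A.IsHermitian) (c : ℝ) :
    (c • A).IsHermitian := by
  unfold Matrix.IsHermitian at *
  rw [conjTranspose_smul, hA]; simp

lemma qf_cont {n : ℕ} (A : Matrix (Fin n) (Fin n) ℂ) : Continuous (qf A) := by
  unfold qf
  simp only [dotProduct, mulVec]
  fun_prop

lemma gen_max {n : ℕ} (hn : 0 < n) {P H : Matrix (Fin n) (Fin n) ℂ} (hP : P.PosDef) :
    ∃ q : ℝ, (∃ x, x ≠ 0 ∧ qf H x = q * qf P x) ∧ ∀ x, x ≠ 0 → qf H x ≤ q * qf P x := by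
  haveI : Nonempty (Fin n) := ⟨⟨0, hn⟩⟩
  have hne0 : ∀ x ∈ Metric.sphere (0 : Fin n → ℂ) 1, x ≠ 0 := by
    intro x hx h0
    simp [h0] at hx
  obtain ⟨x0, hx0, hmax⟩ := (isCompact_sphere (0 : Fin n → ℂ) 1).exists_isMaxOn
    (NormedSpace.sphere_nonempty.2 zero_le_one)
    (f := fun x => qf H x / qf P x)
    ((qf_cont H).continuousOn.div (qf_cont P).continuousOn
      fun x hx => (qf_pos hP (hne0 x hx)).ne')
  refine ⟨qf H x0 / qf P x0, ⟨x0, hne0 x0 hx0, ?_⟩, ?_⟩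
  · have := (qf_pos hP (hne0 x0 hx0)).ne'
    field_simp
  · intro x hx
    have hnx : 0 < ‖x‖ := norm_pos_iff.2 hx
    have h1 := hmax (show (‖x‖⁻¹ • x) ∈ Metric.sphere (0 : Fin n → ℂ) 1 by
      simp [norm_smul, hnx.ne'])
    have h2 : qf H x / qf P x ≤ qf H x0 / qf P x0 := by
      have h3 : qf H (‖x‖⁻¹ • x) / qf P (‖x‖⁻¹ • x) = qf H x / qf P x := by
        rw [qf_vec, qf_vec, mul_div_mul_left _ _ (by positivity)]
      rw [← h3]; exact h1
    exact (div_le_iff₀ (qf_pos hP hx)).1 h2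

lemma one_side {n : ℕ} (hn : 0 < n) {A₁ A₂ B₁ B₂ : Matrix (Fin n) (Fin n) ℂ}
    (hA₁ : A₁.PosDef) (hA₂ : A₂.IsHermitian) (hB₁ : B₁.IsHermitian) (hB₂ : B₂.IsHermitian)
    (h : ∀ x y, x ≠ 0 → y ≠ 0 → 0 < qf A₁ x * qf B₁ y + qf A₂ x * qf B₂ y) :
    ∃ q : ℝ, (q • A₁ + -A₂).PosDef ∧ (B₁ + q • B₂).PosDef := by
  obtain ⟨q, ⟨x0, hx0, hq⟩, hmax⟩ := gen_max hn (H := A₂) hA₁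
  have hP : (B₁ + q • B₂).PosDef := by
    refine posDef_of_qf (hB₁.add (herm_smul hB₂ q)) fun y hy => ?_
    have h1 := h x0 y hx0 hy
    rw [hq] at h1
    rw [qf_add, qf_smul]
    have h2 := qf_pos hA₁ hx0
    have h3 : 0 < qf A₁ x0 * (qf B₁ y + q * qf B₂ y) := by linarith
    exact (mul_pos_iff_of_pos_left h2).1 h3
  obtain ⟨c, -, hc⟩ := gen_max hn (H := -B₂) hP
  have hc0 : 0 < |c| + 1 := by positivity
  refine ⟨q + (|c| + 1)⁻¹, ?_, ?_⟩
  · refine posDef_of_qf ((herm_smul hA₁.isHermitian _).add hA₂.neg) fun x hx => ?_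
    have h1 := hmax x hx
    have h2 := qf_pos hA₁ hx
    have : 0 < (|c| + 1)⁻¹ * qf A₁ x := by positivity
    rw [qf_add, qf_smul, qf_neg]
    linarith
  · refine posDef_of_qf (hB₁.add (herm_smul hB₂ _)) fun y hy => ?_
    have h1 := hc y hy
    have h2 := qf_pos hP hy
    rw [qf_neg] at h1
    rw [qf_add, qf_smul] at h1 h2 ⊢
    have h4 : c * (qf B₁ y + q * qf B₂ y) < (|c| + 1) * (qf B₁ y + q * qf B₂ y) := by
      apply mul_lt_mul_of_pos_right _ h2
      linarith [le_abs_self c]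
    have h5 : 0 < (|c| + 1)⁻¹ * ((|c| + 1) * (qf B₁ y + q * qf B₂ y) + qf B₂ y) := by
      apply mul_pos (by positivity); linarith
    rw [mul_add, inv_mul_cancel_left₀ hc0.ne'] at h5
    linarith

lemma main_pos {n : ℕ} (hn : 0 < n) {A₁ A₂ B₁ B₂ : Matrix (Fin n) (Fin n) ℂ}
    (hA₁ : A₁.PosDef) (hA₂ : A₂.IsHermitian) (hB₁ : B₁.IsHermitian) (hB₂ : B₂.IsHermitian)
    (h : ∀ x y, x ≠ 0 → y ≠ 0 → 0 < qf A₁ x * qf B₁ y + qf A₂ x * qf B₂ y) :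
    ∃ P Q R S : Matrix (Fin n) (Fin n) ℂ, P.PosDef ∧ Q.PosDef ∧ R.PosDef ∧ S.PosDef ∧
      ∃ d : ℝ, 0 < d ∧ ∀ X, P * X * R + Q * X * S = d • (A₁ * X * B₁ + A₂ * X * B₂) := by
  obtain ⟨q, hQ, hS⟩ := one_side hn hA₁ hA₂ hB₁ hB₂ h
  obtain ⟨p, hP, hR⟩ := one_side hn hA₁ hA₂.neg hB₁ hB₂.neg (by
    intro x y hx hy
    rw [qf_neg, qf_neg]
    linarith [h x y hx hy])
  refine ⟨_, _, _, _, hQ, hP, hR, hS, q + p, ?_, ?_⟩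
  · have hx : (fun _ : Fin n => (1 : ℂ)) ≠ 0 := fun h0 => one_ne_zero (congrFun h0 ⟨0, hn⟩)
    have h1 := qf_pos (hQ.add hP) hx
    have h2 := qf_pos hA₁ hx
    simp only [qf_add, qf_smul, qf_neg] at h1
    have h3 : 0 < (q + p) * qf A₁ fun _ : Fin n => (1 : ℂ) := by linarith
    exact (mul_pos_iff_of_pos_right h2).1 h3
  · intro X
    simp only [add_mul, mul_add, neg_mul, mul_neg, smul_mul_assoc, mul_smul_comm, smul_add,
      add_smul, smul_neg, neg_neg]
    module

lemma trace_rank_one {n : ℕ} {A B : Matrix (Fin n) (Fin n) ℂ} (x y : Fin n → ℂ) :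
    trace ((vecMulVec x (star y))ᴴ * (A * vecMulVec x (star y) * B)) =
      (star x ⬝ᵥ A *ᵥ x) * (star y ⬝ᵥ B *ᵥ y) := by
  rw [conjTranspose_vecMulVec, star_star, mul_vecMulVec, vecMulVec_mul _ _ B,
    vecMulVec_mul_vecMulVec, trace_vecMulVec, dotProduct_smul, dotProduct_comm y,
    ← dotProduct_mulVec]
  simp

theorem two_summands_positive {n : ℕ}
    (A₁ A₂ B₁ B₂ : Matrix (Fin n) (Fin n) ℂ)
    (hA₁ : A₁.IsHermitian) (hA₂ : A₂.IsHermitian)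
    (hB₁ : B₁.IsHermitian) (hB₂ : B₂.IsHermitian)
    (h : ∀ X : Matrix (Fin n) (Fin n) ℂ, X ≠ 0 →
      (Matrix.trace (Xᴴ * (A₁ * X * B₁ + A₂ * X * B₂))).im = 0 ∧
      0 < (Matrix.trace (Xᴴ * (A₁ * X * B₁ + A₂ * X * B₂))).re) :
    ∃ A₁' A₂' B₁' B₂' : Matrix (Fin n) (Fin n) ℂ,
      A₁'.PosDef ∧ A₂'.PosDef ∧ B₁'.PosDef ∧ B₂'.PosDef ∧
      ∀ X : Matrix (Fin n) (Fin n) ℂ,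
        A₁ * X * B₁ + A₂ * X * B₂ = A₁' * X * B₁' + A₂' * X * B₂' := by
  rcases Nat.eq_zero_or_pos n with rfl | hn
  · exact ⟨1, 1, 1, 1, PosDef.one, PosDef.one, PosDef.one, PosDef.one,
      fun X => Subsingleton.elim _ _⟩
  have key : ∀ x y, x ≠ 0 → y ≠ 0 → 0 < qf A₁ x * qf B₁ y + qf A₂ x * qf B₂ y := by
    intro x y hx hy
    have hX : vecMulVec x (star y) ≠ 0 := by
      obtain ⟨i, hi⟩ := Function.ne_iff.1 hx
      obtain ⟨j, hj⟩ := Function.ne_iff.1 hy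
      intro h0
      have := congrFun (congrFun h0 i) j
      simp [vecMulVec_apply] at this
      exact this.elim hi hj
    have h1 := (h _ hX).2
    rw [mul_add, trace_add, trace_rank_one, trace_rank_one, qf_im hA₁, qf_im hA₂, qf_im hB₁,
      qf_im hB₂] at h1
    exact_mod_cast h1
  have hx : (fun _ : Fin n => (1 : ℂ)) ≠ 0 := fun h0 => one_ne_zero (congrFun h0 ⟨0, hn⟩)
  obtain ⟨b, hb⟩ : ∃ b, b = qf B₁ (fun _ : Fin n => (1 : ℂ)) := ⟨_, rfl⟩
  obtain ⟨c, hc⟩ : ∃ c, c = qf B₂ (fun _ : Fin n => (1 : ℂ)) := ⟨_, rfl⟩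
  have hbc : 0 < b ^ 2 + c ^ 2 := by
    have h1 := key _ _ hx hx
    rw [← hb, ← hc] at h1
    by_contra h2
    have hb0 : b = 0 := by nlinarith [sq_nonneg b, sq_nonneg c]
    have hc0 : c = 0 := by nlinarith [sq_nonneg b, sq_nonneg c]
    simp [hb0, hc0] at h1
  have hA : (b • A₁ + c • A₂).PosDef := by
    refine posDef_of_qf ((herm_smul hA₁ _).add (herm_smul hA₂ _)) fun x hx' => ?_
    have := key x _ hx' hx
    rw [← hb, ← hc] at this
    rw [qf_add, qf_smul, qf_smul]
    linarith
  obtain ⟨P, Q, R, S, hP, hQ, hR, hS, d, hd, hX⟩ := main_pos hn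
    (A₂ := -(c • A₁) + b • A₂) (B₁ := b • B₁ + c • B₂) (B₂ := -(c • B₁) + b • B₂) hA
    ((herm_smul hA₁ _).neg.add (herm_smul hA₂ _)) ((herm_smul hB₁ _).add (herm_smul hB₂ _))
    ((herm_smul hB₁ _).neg.add (herm_smul hB₂ _)) (by
      intro x y hx hy
      have := mul_pos hbc (key x y hx hy)
      simp only [qf_add, qf_smul, qf_neg]
      linarith)
  have he : 0 < (d * (b ^ 2 + c ^ 2))⁻¹ := by positivity
  refine ⟨(d * (b ^ 2 + c ^ 2))⁻¹ • P, (d * (b ^ 2 + c ^ 2))⁻¹ • Q, R, S,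
    hP.smul he, hQ.smul he, hR, hS, fun X => ?_⟩
  rw [smul_mul_assoc, smul_mul_assoc, smul_mul_assoc, smul_mul_assoc, ← smul_add, hX X,
    eq_inv_smul_iff₀ (by positivity)]
  simp only [add_mul, mul_add, neg_mul, mul_neg, smul_mul_assoc, mul_smul_comm, smul_add,
      smul_neg, neg_neg]
  module
end

section
/- Let 0 < ε < 1/2 and define 𝒜 : M_2(ℂ) → M_2(ℂ) by 𝒜([[x, y], [w, z]]) = [[x + (1−ε)z, εy], [εw, z + (1−ε)x]]. Then there do NOT exist m ∈ ℕ and positive matrices A_i, B_i ∈ M_2(ℂ), i = 1, …, m, such that 𝒜(X) = Σ_{i=1}^m A_i X B_i for all X ∈ M_2(ℂ). -/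
open Matrix ComplexOrder

/-- The Grinberg map `𝒜([[x, y], [w, z]]) = [[x + (1−ε)z, εy], [εw, z + (1−ε)x]]`. -/
def grinbergMap (ε : ℝ) (X : Matrix (Fin 2) (Fin 2) ℂ) : Matrix (Fin 2) (Fin 2) ℂ :=
  !![X 0 0 + (1 - (ε : ℂ)) * X 1 1, (ε : ℂ) * X 0 1;
     (ε : ℂ) * X 1 0, X 1 1 + (1 - (ε : ℂ)) * X 0 0]

theorem posDef_two_facts {A : Matrix (Fin 2) (Fin 2) ℂ} (h : A.PosDef) :
    0 < (A 0 0).re ∧ 0 < (A 1 1).re ∧ (A 0 0).im = 0 ∧ (A 1 1).im = 0 ∧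
      ‖A 1 0‖ = ‖A 0 1‖ ∧ ‖A 0 1‖ ^ 2 ≤ (A 0 0).re * (A 1 1).re := by
  have h0 := Complex.lt_def.1 (h.diag_pos (i := 0))
  have h1 := Complex.lt_def.1 (h.diag_pos (i := 1))
  have hd := (Complex.lt_def.1 h.det_pos).1
  have hs : A 1 0 = star (A 0 1) := (h.isHermitian.apply 1 0).symm
  simp only [Complex.zero_re, Complex.zero_im] at h0 h1 hd
  rw [Matrix.det_fin_two, hs] at hd
  refine ⟨h0.1, h1.1, h0.2.symm, h1.2.symm, by rw [hs, norm_star], ?_⟩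
  rw [← Complex.normSq_eq_norm_sq, Complex.normSq_apply]
  simp [Complex.mul_re, ← h0.2] at hd
  nlinarith

theorem posDef_pair_bound {A B : Matrix (Fin 2) (Fin 2) ℂ} (hA : A.PosDef) (hB : B.PosDef) :
    2 * (A 1 0 * B 0 1).re ≤ (A 0 0 * B 1 1).re + (A 1 1 * B 0 0).re := by
  obtain ⟨a0, a1, a2, a3, a4, a5⟩ := posDef_two_facts hA
  obtain ⟨b0, b1, b2, b3, b4, b5⟩ := posDef_two_facts hB
  have h1 : (A 1 0 * B 0 1).re ≤ ‖A 0 1‖ * ‖B 0 1‖ := by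
    rw [← a4, ← norm_mul]; exact Complex.re_le_norm _
  rw [Complex.mul_re (A 0 0), Complex.mul_re (A 1 1), a2, a3]
  have h2 : (2 * (‖A 0 1‖ * ‖B 0 1‖)) ≤
      (A 0 0).re * (B 1 1).re + (A 1 1).re * (B 0 0).re := by
    refine abs_le_of_sq_le_sq' ?_ (by positivity) |>.2
    have h3 := mul_le_mul a5 b5 (by positivity) (by positivity)
    nlinarith [sq_nonneg ((A 0 0).re * (B 1 1).re - (A 1 1).re * (B 0 0).re)]
  linarith

/-- For `0 < ε < 1/2`, the Grinberg map cannot be written as `X ↦ ∑ᵢ Aᵢ X Bᵢ`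
with all `Aᵢ, Bᵢ ∈ M₂(ℂ)` positive. -/
theorem grinberg_not_positive_sum {ε : ℝ} (hε0 : 0 < ε) (hε : ε < 1 / 2) :
    ¬ ∃ (m : ℕ) (A B : Fin m → Matrix (Fin 2) (Fin 2) ℂ),
      (∀ i, (A i).PosDef) ∧ (∀ i, (B i).PosDef) ∧
      (∀ X : Matrix (Fin 2) (Fin 2) ℂ, grinbergMap ε X = ∑ i, A i * X * B i) := by
  rintro ⟨m, A, B, hA, hB, h⟩
  have e1 := congrArg Complex.re (congrFun (congrFun (h !![1, 0; 0, 0]) 1) 1)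
  have e2 := congrArg Complex.re (congrFun (congrFun (h !![0, 1; 0, 0]) 0) 1)
  have e3 := congrArg Complex.re (congrFun (congrFun (h !![0, 0; 1, 0]) 1) 0)
  simp only [grinbergMap, Matrix.sum_apply, Complex.re_sum, Matrix.mul_apply,
    Fin.sum_univ_two] at e1 e2 e3
  simp [-Complex.mul_re] at e1 e2 e3
  have key := Finset.sum_le_sum (s := Finset.univ)
    (fun i _ => posDef_pair_bound (hA i) (hB i))
  rw [← Finset.mul_sum, Finset.sum_add_distrib] at key
  linarith
end

section
/- Let m ≥ 2 and let 𝒜 : M_n(ℂ) → M_n(ℂ) be given by 𝒜(X) = Σ_{i=1}^m A_i X B_i with all A_i, B_i ∈ M_n(ℂ) Hermitian. If ⟨𝒜(X), X⟩ > 0 for all nonzero X ∈ M_n(ℂ) (Frobenius inner product), then there exist positive matrices A_i', B_i' ∈ M_n(ℂ), i = 1, …, m, such that 𝒜(X) = −A_1' X B_1' + Σ_{i=2}^m A_i' X B_i' for all X ∈ M_n(ℂ). -/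
open Matrix ComplexOrder

/-- Real quadratic form of a complex matrix. -/
noncomputable def qform {n : ℕ} (M : Matrix (Fin n) (Fin n) ℂ) (x : Fin n → ℂ) : ℝ :=
  (star x ⬝ᵥ (M *ᵥ x)).re

lemma qform_coe {n : ℕ} {M : Matrix (Fin n) (Fin n) ℂ} (hM : M.IsHermitian) (x : Fin n → ℂ) :
    star x ⬝ᵥ (M *ᵥ x) = (qform M x : ℂ) := by
  apply Complex.ext
  · simp [qform]
  · simpa using hM.im_star_dotProduct_mulVec_self x

lemma qform_add {n : ℕ} (M N : Matrix (Fin n) (Fin n) ℂ) (x : Fin n → ℂ) :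
    qform (M + N) x = qform M x + qform N x := by
  simp [qform, Matrix.add_mulVec]

lemma qform_smul {n : ℕ} (r : ℝ) (M : Matrix (Fin n) (Fin n) ℂ) (x : Fin n → ℂ) :
    qform (r • M) x = r * qform M x := by
  simp [qform, Matrix.smul_mulVec]

lemma qform_sum {n : ℕ} {ι : Type*} (s : Finset ι) (M : ι → Matrix (Fin n) (Fin n) ℂ)
    (x : Fin n → ℂ) : qform (∑ i ∈ s, M i) x = ∑ i ∈ s, qform (M i) x := by
  simp [qform, Matrix.sum_mulVec, dotProduct_sum]

lemma posDef_of_qform {n : ℕ} {M : Matrix (Fin n) (Fin n) ℂ} (hM : M.IsHermitian)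
    (h : ∀ x, x ≠ 0 → 0 < qform M x) : M.PosDef := by
  refine Matrix.PosDef.of_dotProduct_mulVec_pos hM fun x hx => ?_
  rw [qform_coe hM]
  exact_mod_cast h x hx

lemma qform_pos {n : ℕ} {M : Matrix (Fin n) (Fin n) ℂ} (hM : M.PosDef) {x : Fin n → ℂ}
    (hx : x ≠ 0) : 0 < qform M x := by
  have := hM.dotProduct_mulVec_pos hx
  rw [qform_coe hM.isHermitian] at this
  exact_mod_cast this

lemma herm_smul_s15 {n : ℕ} (r : ℝ) {M : Matrix (Fin n) (Fin n) ℂ} (hM : M.IsHermitian) :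
    (r • M).IsHermitian := by
  unfold Matrix.IsHermitian at *
  rw [Matrix.conjTranspose_smul, hM]; simp

lemma herm_sum {n : ℕ} {ι : Type*} (s : Finset ι) {M : ι → Matrix (Fin n) (Fin n) ℂ}
    (hM : ∀ i, (M i).IsHermitian) : (∑ i ∈ s, M i).IsHermitian := by
  unfold Matrix.IsHermitian at *
  rw [Matrix.conjTranspose_sum]
  exact Finset.sum_congr rfl fun i _ => hM i

lemma qform_scale {n : ℕ} (r : ℝ) (M : Matrix (Fin n) (Fin n) ℂ) (x : Fin n → ℂ) :
    qform M (r • x) = r ^ 2 * qform M x := by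
  have : star (r • x) = r • star x := by ext i; simp
  simp only [qform, this, Matrix.mulVec_smul, smul_dotProduct, dotProduct_smul, Complex.smul_re,
    smul_eq_mul]
  ring

/-- Minimum of a generalized Rayleigh quotient. -/
lemma exists_min {n : ℕ} (hn : 0 < n) (N : Matrix (Fin n) (Fin n) ℂ)
    {M : Matrix (Fin n) (Fin n) ℂ} (hM : M.PosDef) :
    ∃ (c : ℝ) (y : Fin n → ℂ), y ≠ 0 ∧ qform N y = c * qform M y ∧
      ∀ x, c * qform M x ≤ qform N x := by
  have hcont : ∀ K : Matrix (Fin n) (Fin n) ℂ, Continuous (qform K) := by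
    intro K
    unfold qform
    exact Complex.continuous_re.comp
      (Continuous.dotProduct continuous_star (Continuous.matrix_mulVec continuous_const continuous_id))
  have hne : (Metric.sphere (0 : Fin n → ℂ) 1).Nonempty := by
    have : Nonempty (Fin n) := ⟨⟨0, hn⟩⟩
    exact ⟨fun _ => 1, by
      rw [mem_sphere_zero_iff_norm, pi_norm_const, norm_one]⟩
  have hs0 : ∀ x ∈ Metric.sphere (0 : Fin n → ℂ) 1, x ≠ 0 := by
    rintro x hx rfl
    simp at hx
  obtain ⟨y, hy, hmin⟩ := (isCompact_sphere (0 : Fin n → ℂ) 1).exists_isMinOn hne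
    (f := fun x => qform N x / qform M x)
    ((hcont N).continuousOn.div (hcont M).continuousOn
      fun x hx => (qform_pos hM (hs0 x hx)).ne')
  refine ⟨qform N y / qform M y, y, hs0 y hy, ?_, ?_⟩
  · have := (qform_pos hM (hs0 y hy)).ne'
    field_simp
  · intro x
    by_cases hx : x = 0
    · subst hx; simp [qform]
    have hnx : 0 < ‖x‖ := norm_pos_iff.mpr hx
    have hz : (‖x‖⁻¹ • x) ∈ Metric.sphere (0 : Fin n → ℂ) 1 := by
      simp [norm_smul, hnx.ne']
    have h1 := hmin hz
    simp only [Set.mem_ofPred_eq] at h1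
    rw [le_div_iff₀ (qform_pos hM (hs0 _ hz)), qform_scale, qform_scale] at h1
    have h2 : 0 < ‖x‖⁻¹ ^ 2 := by positivity
    nlinarith

lemma eventually_posDef {n : ℕ} {P H : Matrix (Fin n) (Fin n) ℂ} (hP : P.PosDef)
    (hH : H.IsHermitian) : ∀ᶠ r : ℝ in Filter.atTop, (H + r • P).PosDef := by
  rcases Nat.eq_zero_or_pos n with rfl | hn
  · refine Filter.Eventually.of_forall fun r => ?_
    refine posDef_of_qform (hH.add (herm_smul_s15 r hP.isHermitian)) fun x hx => ?_
    exact absurd (Subsingleton.elim x 0) hx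
  · obtain ⟨c, y, -, -, hc⟩ := exists_min hn H hP
    filter_upwards [Filter.eventually_gt_atTop (-c)] with r hr
    refine posDef_of_qform (hH.add (herm_smul_s15 r hP.isHermitian)) fun x hx => ?_
    rw [qform_add, qform_smul]
    have := qform_pos hP hx
    nlinarith [hc x]

lemma shift_left {n : ℕ} {ι : Type*} [Fintype ι] [DecidableEq ι]
    (A B : ι → Matrix (Fin n) (Fin n) ℂ) (i0 : ι) (c : ι → ℝ) (hc : c i0 = 0)
    (X : Matrix (Fin n) (Fin n) ℂ) :
    ∑ i, A i * X * B i = ∑ i, (A i + c i • A i0) * X *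
      (B i - if i = i0 then ∑ k, c k • B k else 0) := by
  have : ∀ i, (A i + c i • A i0) * X * (B i - if i = i0 then ∑ k, c k • B k else 0)
      = A i * X * B i + A i0 * X * (c i • B i)
        - if i = i0 then A i0 * X * ∑ k, c k • B k else 0 := by
    intro i
    split_ifs with hi
    · subst hi; simp [hc, mul_sub]
    · simp [add_mul]
  simp only [this, Finset.sum_sub_distrib, Finset.sum_add_distrib, Finset.sum_ite_eq',
    Finset.mem_univ, if_true, Finset.mul_sum]
  simp

lemma shift_right {n : ℕ} {ι : Type*} [Fintype ι] [DecidableEq ι]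
    (A B : ι → Matrix (Fin n) (Fin n) ℂ) (i0 : ι) (c : ι → ℝ) (hc : c i0 = 0)
    (X : Matrix (Fin n) (Fin n) ℂ) :
    ∑ i, A i * X * B i = ∑ i, (A i - if i = i0 then ∑ k, c k • A k else 0) * X *
      (B i + c i • B i0) := by
  have : ∀ i, (A i - if i = i0 then ∑ k, c k • A k else 0) * X * (B i + c i • B i0)
      = A i * X * B i + (c i • A i) * X * B i0
        - if i = i0 then (∑ k, c k • A k) * X * B i0 else 0 := by
    intro i
    split_ifs with hi
    · subst hi; simp [hc, sub_mul]
    · simp [mul_add]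
  simp only [this, Finset.sum_sub_distrib, Finset.sum_add_distrib, Finset.sum_ite_eq',
    Finset.mem_univ, if_true, Finset.sum_mul]
  simp

/-- The second step, once all `B i`, `i ≠ i0`, and `A i0` are positive. -/
lemma finish_two {n : ℕ} {ι : Type*} [Fintype ι] [DecidableEq ι]
    (A B : ι → Matrix (Fin n) (Fin n) ℂ) (hA : ∀ i, (A i).IsHermitian)
    (hB : ∀ i, (B i).IsHermitian) (i0 i1 : ι) (h01 : i1 ≠ i0) (hA0 : (A i0).PosDef)
    (hB1 : ∀ i, i ≠ i0 → (B i).PosDef) :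
    ∃ A' B' : ι → Matrix (Fin n) (Fin n) ℂ, (∀ i, (A' i).PosDef) ∧ (∀ i, (B' i).PosDef) ∧
      ∀ X, ∑ i, A i * X * B i =
        -(A' i0 * X * B' i0) + ∑ i ∈ Finset.univ.erase i0, A' i * X * B' i := by
  have hS : (∑ i ∈ Finset.univ.erase i0, B i).PosDef := by
    refine posDef_of_qform (herm_sum _ hB) fun x hx => ?_
    rw [qform_sum]
    exact Finset.sum_pos (fun i hi => qform_pos (hB1 i (Finset.ne_of_mem_erase hi)) hx)
      ⟨i1, by simp [h01]⟩
  have e1 : ∀ᶠ r : ℝ in Filter.atTop, ∀ i, (A i + r • A i0).PosDef :=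
    Filter.eventually_all.mpr fun i => eventually_posDef hA0 (hA i)
  obtain ⟨r, h1, h2⟩ := (e1.and (eventually_posDef hS (hB i0).neg)).exists
  refine ⟨fun i => if i = i0 then A i0 else A i + r • A i0,
    fun i => if i = i0 then -B i0 + r • ∑ i ∈ Finset.univ.erase i0, B i else B i, ?_, ?_, ?_⟩
  · intro i
    dsimp only
    split_ifs
    exacts [hA0, h1 i]
  · intro i
    dsimp only
    split_ifs with hi
    exacts [h2, hB1 i hi]
  · intro X
    rw [shift_left A B i0 (fun i => if i = i0 then 0 else r) (by simp) X,
      ← Finset.add_sum_erase _ _ (Finset.mem_univ i0)]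
    congr 1
    · have : ∑ k, (if k = i0 then (0 : ℝ) else r) • B k
          = r • ∑ i ∈ Finset.univ.erase i0, B i := by
        rw [← Finset.add_sum_erase _ _ (Finset.mem_univ i0), Finset.smul_sum]
        simp only [if_true, zero_smul, zero_add]
        refine Finset.sum_congr rfl fun k hk => ?_
        rw [if_neg (Finset.ne_of_mem_erase hk)]
      simp only [if_true, this, zero_smul, add_zero]
      rw [← mul_neg]
      congr 1
      abel
    · refine Finset.sum_congr rfl fun k hk => ?_
      simp [Finset.ne_of_mem_erase hk]

lemma finish_one {n : ℕ} {ι : Type*} [Fintype ι] [DecidableEq ι]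
    (A B : ι → Matrix (Fin n) (Fin n) ℂ) (hA : ∀ i, (A i).IsHermitian)
    (hB : ∀ i, (B i).IsHermitian) (i0 i1 : ι) (h01 : i1 ≠ i0) (hA0 : (A i0).PosDef)
    (hB1 : (B i1).PosDef) :
    ∃ A' B' : ι → Matrix (Fin n) (Fin n) ℂ, (∀ i, (A' i).PosDef) ∧ (∀ i, (B' i).PosDef) ∧
      ∀ X, ∑ i, A i * X * B i =
        -(A' i0 * X * B' i0) + ∑ i ∈ Finset.univ.erase i0, A' i * X * B' i := by
  have e1 : ∀ᶠ r : ℝ in Filter.atTop, ∀ i, (B i + r • B i1).PosDef :=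
    Filter.eventually_all.mpr fun i => eventually_posDef hB1 (hB i)
  obtain ⟨s, hs⟩ := e1.exists
  let c : ι → ℝ := fun i => if i = i1 then 0 else s
  have hc : c i1 = 0 := by simp [c]
  obtain ⟨A', B', h1, h2, h3⟩ := finish_two
    (fun i => A i - if i = i1 then ∑ k, c k • A k else 0) (fun i => B i + c i • B i1)
    (fun i => by
      split_ifs
      · exact (hA i).sub (herm_sum _ fun k => herm_smul_s15 _ (hA k))
      · simpa using hA i)
    (fun i => (hB i).add (herm_smul_s15 _ hB1.isHermitian)) i0 i1 h01
    (by simpa [h01.symm] using hA0)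
    (fun i _ => by
      by_cases hi : i = i1
      · subst hi; simpa [hc] using hB1
      · simpa [c, hi] using hs i)
  exact ⟨A', B', h1, h2, fun X => (shift_right A B i1 c hc X).trans (h3 X)⟩

/-- Combination with real coefficients. -/
noncomputable def comb {n m : ℕ} (p : Fin m → ℝ) (A : Fin m → Matrix (Fin n) (Fin n) ℂ) :
    Matrix (Fin n) (Fin n) ℂ := ∑ i, p i • A i

lemma comb_herm {n m : ℕ} (p : Fin m → ℝ) {A : Fin m → Matrix (Fin n) (Fin n) ℂ}
    (hA : ∀ i, (A i).IsHermitian) : (comb p A).IsHermitian :=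
  herm_sum _ fun i => herm_smul_s15 _ (hA i)

lemma qform_comb {n m : ℕ} (p : Fin m → ℝ) (A : Fin m → Matrix (Fin n) (Fin n) ℂ)
    (x : Fin n → ℂ) : qform (comb p A) x = ∑ i, p i * qform (A i) x := by
  simp [comb, qform_sum, qform_smul]

lemma exists_orth_pair {n m : ℕ} (hn : 0 < n) (hm : 2 ≤ m)
    (A B : Fin m → Matrix (Fin n) (Fin n) ℂ)
    (hA : ∀ i, (A i).IsHermitian) (hB : ∀ i, (B i).IsHermitian)
    (h : ∀ x y, x ≠ 0 → y ≠ 0 → 0 < ∑ i, qform (A i) x * qform (B i) y) :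
    ∃ p f : Fin m → ℝ, (comb p A).PosDef ∧ (comb f B).PosDef ∧ ∑ i, p i * f i = 0 := by
  obtain ⟨x0, hx0⟩ : ∃ x0 : Fin n → ℂ, x0 ≠ 0 :=
    ⟨fun _ => 1, fun h => by simpa using congrFun h ⟨0, hn⟩⟩
  set a0 : Fin m → ℝ := fun i => qform (A i) x0 with ha0
  have hM : (comb a0 B).PosDef := posDef_of_qform (comb_herm _ hB) fun y hy => by
    rw [qform_comb]; exact h x0 y hx0 hy
  obtain ⟨e, he⟩ : ∃ e : Fin m → ℝ, ∀ c : ℝ, e - c • a0 ≠ 0 := by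
    by_contra hcon
    push Not at hcon
    obtain ⟨c, hc⟩ := hcon (Pi.single ⟨0, by omega⟩ 1)
    obtain ⟨d, hd⟩ := hcon (Pi.single ⟨1, by omega⟩ 1)
    have c0 := congrFun hc ⟨0, by omega⟩
    have c1 := congrFun hc ⟨1, by omega⟩
    have d0 := congrFun hd ⟨0, by omega⟩
    have d1 := congrFun hd ⟨1, by omega⟩
    simp [Pi.single_apply] at c0 c1 d0 d1
    rcases c1 with c1 | c1
    · simp [c1] at c0
    · simp [c1] at d1
  obtain ⟨c, y, hy, hyc, hmin⟩ := exists_min hn (comb e B) hM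
  set g : Fin m → ℝ := e - c • a0 with hg
  set b1 : Fin m → ℝ := fun i => qform (B i) y with hb1
  have hP : (comb b1 A).PosDef := posDef_of_qform (comb_herm _ hA) fun x hx => by
    rw [qform_comb]; simpa [hb1, mul_comm] using h x y hx hy
  have hgq : ∀ x, qform (comb g B) x = qform (comb e B) x - c * qform (comb a0 B) x := by
    intro x
    simp only [qform_comb, hg, Pi.sub_apply, Pi.smul_apply, smul_eq_mul, sub_mul,
      Finset.sum_sub_distrib, Finset.mul_sum, mul_assoc]
  have hgb : ∑ i, g i * b1 i = 0 := by
    have := hgq y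
    rw [hyc, sub_self, qform_comb] at this
    exact this
  obtain ⟨r, hr, hr0⟩ := ((eventually_posDef hP (comb_herm g hA).neg).and
    (Filter.eventually_gt_atTop 0)).exists
  -- p = r b1 - g
  let p : Fin m → ℝ := r • b1 - g
  have hp : (comb p A).PosDef := by
    have : comb p A = -comb g A + r • comb b1 A := by
      simp only [comb, p, Pi.sub_apply, Pi.smul_apply, sub_smul, Finset.sum_sub_distrib,
        Finset.smul_sum, smul_assoc]
      abel
    rw [this]; exact hr
  have hpa : 0 < ∑ i, p i * a0 i := by
    have := qform_pos hp hx0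
    rwa [qform_comb] at this
  have hgg : 0 < ∑ i, g i * g i := by
    obtain ⟨j, hj⟩ := Function.ne_iff.mp (he c)
    exact Finset.sum_pos' (fun i _ => mul_self_nonneg _) ⟨j, Finset.mem_univ _,
      mul_self_pos.mpr hj⟩
  set ε : ℝ := (∑ i, g i * g i) / ∑ i, p i * a0 i with hε
  have hε0 : 0 < ε := div_pos hgg hpa
  refine ⟨p, g + ε • a0, hp, ?_, ?_⟩
  · refine posDef_of_qform (comb_herm _ hB) fun x hx => ?_
    have h1 : qform (comb (g + ε • a0) B) x
        = qform (comb g B) x + ε * qform (comb a0 B) x := by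
      simp only [qform_comb, Pi.add_apply, Pi.smul_apply, smul_eq_mul, add_mul,
        Finset.sum_add_distrib, Finset.mul_sum, mul_assoc]
    rw [h1, hgq]
    have := hmin x
    have := mul_pos hε0 (qform_pos hM hx)
    linarith
  · have h1 : ∑ i, p i * (g + ε • a0) i = ∑ i, p i * g i + ε * ∑ i, p i * a0 i := by
      rw [Finset.mul_sum, ← Finset.sum_add_distrib]
      refine Finset.sum_congr rfl fun i _ => ?_
      simp; ring
    have h2 : ∑ i, p i * g i = r * ∑ i, g i * b1 i - ∑ i, g i * g i := by
      rw [Finset.mul_sum, ← Finset.sum_sub_distrib]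
      refine Finset.sum_congr rfl fun i _ => ?_
      simp [p]; ring
    rw [h1, h2, hgb, hε, div_mul_cancel₀ _ hpa.ne']
    ring

lemma comb_smul {n m : ℕ} (t : ℝ) (p : Fin m → ℝ) (A : Fin m → Matrix (Fin n) (Fin n) ℂ) :
    comb (fun i => t * p i) A = t • comb p A := by
  simp [comb, Finset.smul_sum, mul_smul]

lemma posDef_smul {n : ℕ} {t : ℝ} (ht : 0 < t) {M : Matrix (Fin n) (Fin n) ℂ}
    (hM : M.PosDef) : (t • M).PosDef :=
  posDef_of_qform (herm_smul_s15 t hM.isHermitian) fun x hx => by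
    rw [qform_smul]; exact mul_pos ht (qform_pos hM hx)

lemma exists_rotation {m : ℕ} (i0 i1 : Fin m) (h01 : i1 ≠ i0) (p f : Fin m → ℝ) (hp : p ≠ 0)
    (hf : f ≠ 0) (hpf : ∑ i, p i * f i = 0) :
    ∃ U : Fin m → Fin m → ℝ, (∀ i k, ∑ j, U j i * U j k = if i = k then 1 else 0) ∧
      (∃ s > 0, U i0 = fun i => s * p i) ∧ (∃ t > 0, U i1 = fun i => t * f i) := by
  let P : EuclideanSpace ℝ (Fin m) := WithLp.toLp 2 p
  let F : EuclideanSpace ℝ (Fin m) := WithLp.toLp 2 f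
  have hP : P ≠ 0 := fun h => hp (by simpa [P] using h)
  have hF : F ≠ 0 := fun h => hf (by simpa [F] using h)
  have hPF : inner ℝ P F = 0 := by
    simp [P, F, PiLp.inner_apply]
    simpa [mul_comm] using hpf
  have hnP : 0 < ‖P‖ := norm_pos_iff.mpr hP
  have hnF : 0 < ‖F‖ := norm_pos_iff.mpr hF
  let v : Fin m → EuclideanSpace ℝ (Fin m) := fun i => if i = i0 then ‖P‖⁻¹ • P else ‖F‖⁻¹ • F
  have hv : Orthonormal ℝ (({i0, i1} : Set (Fin m)).domRestrict v) := by
    constructor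
    · rintro ⟨i, hi⟩
      rcases hi with rfl | rfl
      · simp [v, norm_smul, hnP.ne']
      · simp [v, h01, norm_smul, hnF.ne']
    · rintro ⟨i, hi⟩ ⟨j, hj⟩ hij
      have hij' : i ≠ j := fun h => hij (Subtype.ext h)
      rcases hi with rfl | rfl <;> rcases hj with rfl | rfl
      · exact absurd rfl hij'
      · simp [v, h01, inner_smul_left, inner_smul_right, hPF]
      · simp [v, h01, inner_smul_left, inner_smul_right, real_inner_comm, hPF]
      · exact absurd rfl hij'
  obtain ⟨b, hb⟩ := hv.exists_orthonormalBasis_extension_of_card_eq (by simp)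
  refine ⟨fun j i => b j i, ?_, ⟨‖P‖⁻¹, by positivity, ?_⟩, ⟨‖F‖⁻¹, by positivity, ?_⟩⟩
  · intro i k
    have := b.sum_inner_mul_inner (EuclideanSpace.single i 1) (EuclideanSpace.single k 1)
    simpa [EuclideanSpace.inner_single_left, EuclideanSpace.inner_single_right,
      Pi.single_apply, eq_comm] using this
  · funext i
    change b i0 i = _
    rw [hb i0 (by simp)]
    simp [v, P]
  · funext i
    change b i1 i = _
    rw [hb i1 (by simp)]
    simp [v, F, h01]

lemma rotate {n m : ℕ} (A B : Fin m → Matrix (Fin n) (Fin n) ℂ) (U : Fin m → Fin m → ℝ)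
    (hU : ∀ i k, ∑ j, U j i * U j k = if i = k then 1 else 0) (X : Matrix (Fin n) (Fin n) ℂ) :
    ∑ i, A i * X * B i = ∑ j, comb (U j) A * X * comb (U j) B := by
  have h1 : ∀ j, comb (U j) A * X * comb (U j) B
      = ∑ i, ∑ k, (U j i * U j k) • (A i * X * B k) := by
    intro j
    simp only [comb, Finset.sum_mul, Finset.mul_sum]
    rw [Finset.sum_comm]
    refine Finset.sum_congr rfl fun i _ => Finset.sum_congr rfl fun k _ => ?_
    simp [smul_smul, mul_comm]
  simp only [h1]
  rw [Finset.sum_comm]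
  refine Finset.sum_congr rfl fun i _ => ?_
  rw [Finset.sum_comm]
  simp only [← Finset.sum_smul, hU, ite_smul, one_smul, zero_smul, Finset.sum_ite_eq,
    Finset.mem_univ, if_true]

lemma rank_one {n m : ℕ} (A B : Fin m → Matrix (Fin n) (Fin n) ℂ)
    (hA : ∀ i, (A i).IsHermitian) (hB : ∀ i, (B i).IsHermitian) (x y : Fin n → ℂ) :
    (Matrix.trace ((vecMulVec x (star y))ᴴ * ∑ i, A i * vecMulVec x (star y) * B i)).re
      = ∑ i, qform (A i) x * qform (B i) y := by
  rw [Finset.mul_sum, Matrix.trace_sum, Complex.re_sum]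
  refine Finset.sum_congr rfl fun i _ => ?_
  have : Matrix.trace ((vecMulVec x (star y))ᴴ * (A i * vecMulVec x (star y) * B i))
      = (star x ⬝ᵥ (A i *ᵥ x)) * (star y ⬝ᵥ (B i *ᵥ y)) := by
    rw [Matrix.conjTranspose_vecMulVec, star_star, Matrix.mul_vecMulVec,
      Matrix.vecMulVec_mul (A i *ᵥ x),
      Matrix.vecMulVec_mul_vecMulVec, Matrix.trace_vecMulVec, dotProduct_mulVec (star y)]
    simp [dotProduct_smul, dotProduct_comm]
  rw [this, qform_coe (hA i), qform_coe (hB i), ← Complex.ofReal_mul, Complex.ofReal_re]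


/-- If `m ≥ 2`, `𝒜(X) = ∑ᵢ Aᵢ X Bᵢ` with all `Aᵢ, Bᵢ` Hermitian, and
`⟨𝒜(X), X⟩ > 0` for all nonzero `X` (Frobenius inner product), then there exist
positive matrices `Aᵢ', Bᵢ'` with
`𝒜(X) = −A₁' X B₁' + ∑_{i=2}^m Aᵢ' X Bᵢ'` for all `X`. -/
theorem positive_up_to_sign_decomposition {n m : ℕ} (hm : 2 ≤ m)
    (A B : Fin m → Matrix (Fin n) (Fin n) ℂ)
    (hA : ∀ i, (A i).IsHermitian) (hB : ∀ i, (B i).IsHermitian)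
    (h : ∀ X : Matrix (Fin n) (Fin n) ℂ, X ≠ 0 →
      (Matrix.trace (Xᴴ * ∑ i, A i * X * B i)).im = 0 ∧
      0 < (Matrix.trace (Xᴴ * ∑ i, A i * X * B i)).re) :
    ∃ A' B' : Fin m → Matrix (Fin n) (Fin n) ℂ,
      (∀ i, (A' i).PosDef) ∧ (∀ i, (B' i).PosDef) ∧
      (∀ X : Matrix (Fin n) (Fin n) ℂ,
        ∑ i, A i * X * B i =
          -(A' ⟨0, by omega⟩ * X * B' ⟨0, by omega⟩)
            + ∑ i ∈ Finset.univ.erase ⟨0, by omega⟩, A' i * X * B' i) := by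
  have h01 : (⟨1, by omega⟩ : Fin m) ≠ ⟨0, by omega⟩ := by simp
  rcases Nat.eq_zero_or_pos n with rfl | hn
  · exact ⟨fun _ => 1, fun _ => 1, fun _ => Matrix.PosDef.one, fun _ => Matrix.PosDef.one,
      fun X => Subsingleton.elim _ _⟩
  have hq : ∀ x y, x ≠ 0 → y ≠ 0 → 0 < ∑ i, qform (A i) x * qform (B i) y := by
    intro x y hx hy
    rw [← rank_one A B hA hB]
    refine (h _ ?_).2
    obtain ⟨i, hi⟩ := Function.ne_iff.mp hx
    obtain ⟨j, hj⟩ := Function.ne_iff.mp hy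
    intro h0
    have := congrFun (congrFun h0 i) j
    simp [Matrix.vecMulVec_apply] at this
    rcases this with h1 | h1
    · exact hi h1
    · exact hj h1
  obtain ⟨p, f, hp, hf, hpf⟩ := exists_orth_pair hn hm A B hA hB hq
  have hne : ∀ (q : Fin m → ℝ) (C : Fin m → Matrix (Fin n) (Fin n) ℂ),
      (comb q C).PosDef → q ≠ 0 := by
    rintro q C hC rfl
    have hx0 : (fun _ => 1 : Fin n → ℂ) ≠ 0 := fun h => by simpa using congrFun h ⟨0, hn⟩
    have := qform_pos hC hx0
    simp [qform_comb] at this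
  obtain ⟨U, hU, ⟨s, hs, hUs⟩, ⟨t, ht, hUt⟩⟩ :=
    exists_rotation ⟨0, by omega⟩ ⟨1, by omega⟩ h01 p f (hne p A hp) (hne f B hf) hpf
  obtain ⟨A', B', h1, h2, h3⟩ := finish_one (fun j => comb (U j) A) (fun j => comb (U j) B)
    (fun j => comb_herm _ hA) (fun j => comb_herm _ hB) ⟨0, by omega⟩ ⟨1, by omega⟩ h01
    (by
      rw [hUs, comb_smul]; exact posDef_smul hs hp)
    (by
      rw [hUt, comb_smul]; exact posDef_smul ht hf)
  exact ⟨A', B', h1, h2, fun X => (rotate A B U hU X).trans (h3 X)⟩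
end

section
/- Let m ≥ 2 and let 𝒜 : M_n(ℂ) → M_n(ℂ) be given by 𝒜(X) = −A_1 X B_1 + Σ_{i=2}^m A_i X B_i with all A_i, B_i ∈ M_n(ℂ) positive. If there exist positive real numbers ξ_k, k = 2, …, m, such that −A_1 + Σ_{k=2}^m ξ_k A_k is a positive matrix and B_k − ξ_k B_1 is a positive matrix for every k = 2, …, m, then there exist positive matrices A_i', B_i' ∈ M_n(ℂ), i = 1, …, m, such that 𝒜(X) = Σ_{i=1}^m A_i' X B_i' for all X ∈ M_n(ℂ). -/
open Matrix ComplexOrder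

/-- Let `m ≥ 2` and `𝒜(X) = −A₁ X B₁ + ∑_{i=2}^m Aᵢ X Bᵢ` with all `Aᵢ, Bᵢ` positive.
If there are positive reals `ξ_k` (`k = 2,…,m`) such that `−A₁ + ∑_{k=2}^m ξ_k A_k`
is positive and `B_k − ξ_k B₁` is positive for every `k = 2,…,m`, then there exist
positive matrices `Aᵢ', Bᵢ'` with `𝒜(X) = ∑ᵢ Aᵢ' X Bᵢ'` for all `X`. -/
theorem remove_minus_sign {n m : ℕ} (hm : 2 ≤ m)
    (A B : Fin m → Matrix (Fin n) (Fin n) ℂ)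
    (hA : ∀ i, (A i).PosDef) (hB : ∀ i, (B i).PosDef)
    (ξ : Fin m → ℝ) (hξ : ∀ k : Fin m, k ≠ ⟨0, by omega⟩ → 0 < ξ k)
    (h1 : (-A ⟨0, by omega⟩
        + ∑ k ∈ Finset.univ.erase ⟨0, by omega⟩, (ξ k : ℂ) • A k).PosDef)
    (h2 : ∀ k : Fin m, k ≠ ⟨0, by omega⟩ → (B k - (ξ k : ℂ) • B ⟨0, by omega⟩).PosDef) :
    ∃ A' B' : Fin m → Matrix (Fin n) (Fin n) ℂ,
      (∀ i, (A' i).PosDef) ∧ (∀ i, (B' i).PosDef) ∧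
      (∀ X : Matrix (Fin n) (Fin n) ℂ,
        -(A ⟨0, by omega⟩ * X * B ⟨0, by omega⟩)
            + ∑ i ∈ Finset.univ.erase ⟨0, by omega⟩, A i * X * B i
          = ∑ i, A' i * X * B' i) := by
  generalize (⟨0, by omega⟩ : Fin m) = z at *
  refine ⟨fun i => if i = z then -A z + ∑ k ∈ Finset.univ.erase z, (ξ k : ℂ) • A k else A i,
    fun i => if i = z then B z else B i - (ξ i : ℂ) • B z, ?_, ?_, ?_⟩
  · intro i
    by_cases h : i = z
    · simpa [h] using h1
    · simpa [h] using hA i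
  · intro i
    by_cases h : i = z
    · simpa [h] using hB z
    · simpa [h] using h2 i h
  · intro X
    rw [← Finset.add_sum_erase _ _ (Finset.mem_univ z)]
    have key : ∀ i ∈ Finset.univ.erase z,
        (if i = z then -A z + ∑ k ∈ Finset.univ.erase z, (ξ k : ℂ) • A k else A i) * X *
          (if i = z then B z else B i - (ξ i : ℂ) • B z)
        = A i * X * B i - (ξ i : ℂ) • (A i * X * B z) := by
      intro i hi
      have h : i ≠ z := Finset.ne_of_mem_erase hi
      simp only [if_neg h, Matrix.mul_sub, Matrix.mul_smul]
    rw [Finset.sum_congr rfl key, Finset.sum_sub_distrib]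
    simp only [if_true, Matrix.add_mul, Matrix.neg_mul, Finset.sum_mul, Matrix.smul_mul]
    abel
end

section
/- Let ⟨·,·⟩_* be any inner product on M_n(ℂ) (linear in the first entry, conjugate-linear in the second, conjugate-symmetric, and positive definite). Then there exist m ∈ ℕ and positive matrices A_i, B_i ∈ M_n(ℂ), i = 1, …, m, such that ⟨X, Y⟩_* = trace(−Y* A_1 X B_1 + Σ_{i=2}^m Y* A_i X B_i) for all X, Y ∈ M_n(ℂ). -/
open Matrix ComplexOrder

/-- Forms that are a finite sum of positive pairs minus a positive multiple of the trace form. -/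
def GoodForm {n : ℕ} (φ : Matrix (Fin n) (Fin n) ℂ → Matrix (Fin n) (Fin n) ℂ → ℂ) : Prop :=
  ∃ (c : ℝ) (_ : 0 < c) (m : ℕ) (A B : Fin m → Matrix (Fin n) (Fin n) ℂ),
    (∀ i, (A i).PosDef) ∧ (∀ i, (B i).PosDef) ∧
    ∀ X Y, φ X Y = ∑ i, trace (Yᴴ * A i * X * B i) - (c : ℂ) * trace (Yᴴ * X)

theorem GoodForm.add {n : ℕ} {φ ψ : Matrix (Fin n) (Fin n) ℂ → Matrix (Fin n) (Fin n) ℂ → ℂ}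
    (h1 : GoodForm φ) (h2 : GoodForm ψ) : GoodForm (fun X Y => φ X Y + ψ X Y) := by
  obtain ⟨c, hc, m, A, B, hA, hB, h⟩ := h1
  obtain ⟨c', hc', m', A', B', hA', hB', h'⟩ := h2
  refine ⟨c + c', by positivity, m + m', Fin.append A A', Fin.append B B', ?_, ?_, ?_⟩
  · intro i
    refine Fin.addCases (fun i => ?_) (fun i => ?_) i <;> simp [hA, hA']
  · intro i
    refine Fin.addCases (fun i => ?_) (fun i => ?_) i <;> simp [hB, hB']
  · intro X Y
    simp only [h, h', Fin.sum_univ_add, Fin.append_left, Fin.append_right]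
    push_cast
    ring

theorem GoodForm.zero {n : ℕ} :
    GoodForm (fun _ _ : Matrix (Fin n) (Fin n) ℂ => (0 : ℂ)) := by
  refine ⟨1, one_pos, 1, fun _ => 1, fun _ => 1, fun _ => PosDef.one, fun _ => PosDef.one, ?_⟩
  intro X Y
  simp

theorem GoodForm.sum {n : ℕ} {ι : Type} (s : Finset ι)
    (φ : ι → Matrix (Fin n) (Fin n) ℂ → Matrix (Fin n) (Fin n) ℂ → ℂ)
    (h : ∀ i, GoodForm (φ i)) : GoodForm (fun X Y => ∑ i ∈ s, φ i X Y) := by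
  classical
  induction s using Finset.induction_on with
  | empty => simpa using GoodForm.zero
  | insert a s ha ih =>
    simp only [Finset.sum_insert ha]
    exact (h a).add ih

section bound
open scoped MatrixOrder Matrix.Norms.L2Operator

theorem exists_shift {n : ℕ} (H : Matrix (Fin n) (Fin n) ℂ) (hH : H.IsHermitian) :
    ∃ t₀ : ℝ, ∀ t : ℝ, t₀ < t → ((t : ℂ) • (1 : Matrix (Fin n) (Fin n) ℂ) + H).PosDef := by
  refine ⟨‖H‖, fun t ht => ?_⟩
  have h1 : -(algebraMap ℝ (Matrix (Fin n) (Fin n) ℂ) ‖H‖) ≤ H :=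
    IsSelfAdjoint.neg_algebraMap_norm_le_self (a := H) hH
  rw [Matrix.le_iff] at h1
  have h2 : (((t - ‖H‖ : ℝ) : ℂ) • (1 : Matrix (Fin n) (Fin n) ℂ)).PosDef :=
    PosDef.one.smul (by exact_mod_cast sub_pos.2 ht)
  have h3 := h2.add_posSemidef h1
  convert h3 using 1
  rw [Algebra.algebraMap_eq_smul_one]
  ext i j
  simp [sub_mul]

end bound

theorem GoodForm.herm {n : ℕ} (H K : Matrix (Fin n) (Fin n) ℂ) (hH : H.IsHermitian)
    (hK : K.IsHermitian) : GoodForm (fun X Y => trace (Yᴴ * H * X * K)) := by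
  obtain ⟨a, ha⟩ := exists_shift H hH
  obtain ⟨b, hb⟩ := exists_shift K hK
  obtain ⟨a', ha'⟩ := exists_shift (-H) hH.neg
  obtain ⟨b', hb'⟩ := exists_shift (-K) hK.neg
  obtain ⟨t, ht⟩ : ∃ t : ℝ, 0 < t ∧ a < t ∧ b < t ∧ a' < t ∧ b' < t :=
    ⟨|a| + |b| + |a'| + |b'| + 1, by positivity,
      by linarith [le_abs_self a, abs_nonneg b, abs_nonneg a', abs_nonneg b'],
      by linarith [le_abs_self b, abs_nonneg a, abs_nonneg a', abs_nonneg b'],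
      by linarith [le_abs_self a', abs_nonneg b, abs_nonneg a, abs_nonneg b'],
      by linarith [le_abs_self b', abs_nonneg b, abs_nonneg a', abs_nonneg a]⟩
  obtain ⟨h0, h1, h2, h3, h4⟩ := ht
  have hT : ((t : ℂ) • (1 : Matrix (Fin n) (Fin n) ℂ)).PosDef :=
    PosDef.one.smul (by exact_mod_cast h0)
  refine ⟨3 * t ^ 2, by positivity, 3,
    ![(t : ℂ) • 1 + H, (t : ℂ) • 1 + -H, (t : ℂ) • 1],
    ![(t : ℂ) • 1 + K, (t : ℂ) • 1, (t : ℂ) • 1 + -K], ?_, ?_, ?_⟩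
  · intro i
    fin_cases i
    · exact ha t h1
    · exact ha' t h3
    · exact hT
  · intro i
    fin_cases i
    · exact hb t h2
    · exact hT
    · exact hb' t h4
  · intro X Y
    simp [Fin.sum_univ_succ, Matrix.mul_add, Matrix.add_mul]
    ring

theorem GoodForm.pair {n : ℕ} (P Q : Matrix (Fin n) (Fin n) ℂ) :
    GoodForm (fun X Y => trace (Yᴴ * P * X * Q) + trace (Yᴴ * Pᴴ * X * Qᴴ)) := by
  have e1 : (P + Pᴴ).IsHermitian := by
    simp [IsHermitian, add_comm]
  have e2 : ((1 / 2 : ℂ) • (Q + Qᴴ)).IsHermitian := by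
    simp [IsHermitian, conjTranspose_smul, add_comm]
  have e3 : (Complex.I • (P - Pᴴ)).IsHermitian := by
    simp [IsHermitian, conjTranspose_smul, ← smul_neg]
  have e4 : ((-Complex.I / 2 : ℂ) • (Q - Qᴴ)).IsHermitian := by
    simp only [IsHermitian, conjTranspose_smul, conjTranspose_sub, conjTranspose_conjTranspose]
    rw [← neg_sub Q Qᴴ, smul_neg, ← neg_smul]
    congr 1
    simp
    ring
  have := (GoodForm.herm _ _ e1 e2).add (GoodForm.herm _ _ e3 e4)
  convert this using 3 with X Y
  simp only [Matrix.mul_add, Matrix.add_mul, Matrix.mul_sub, Matrix.sub_mul, Matrix.mul_smul,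
    Matrix.smul_mul, trace_add, trace_sub, trace_smul, smul_eq_mul]
  ring_nf
  simp only [Complex.I_sq]
  ring

theorem trace_single_form {n : ℕ} (X Y : Matrix (Fin n) (Fin n) ℂ) (i j k l : Fin n) (g : ℂ) :
    trace (Yᴴ * single k i g * X * single j l 1) = g * (X i j * star (Y k l)) := by
  rw [trace_mul_comm, trace_single_mul]
  rw [Matrix.mul_apply, Finset.sum_eq_single i]
  · rw [mul_single_apply_same]
    simp
    ring
  · intro b _ hb
    rw [mul_single_apply_of_ne _ _ _ _ _ hb]
    simp
  · simp

/-- Every inner product `⟨·,·⟩_*` on `Mₙ(ℂ)` (linear in the first entry,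
conjugate-symmetric, positive definite) has the form
`⟨X, Y⟩_* = trace(−Yᴴ A₁ X B₁ + ∑_{i=2}^m Yᴴ Aᵢ X Bᵢ)` for some `m ∈ ℕ` and
positive matrices `Aᵢ, Bᵢ ∈ Mₙ(ℂ)`. -/
theorem inner_product_trace_form {n : ℕ}
    (φ : Matrix (Fin n) (Fin n) ℂ → Matrix (Fin n) (Fin n) ℂ → ℂ)
    (hadd : ∀ X X' Y : Matrix (Fin n) (Fin n) ℂ, φ (X + X') Y = φ X Y + φ X' Y)
    (hsmul : ∀ (c : ℂ) (X Y : Matrix (Fin n) (Fin n) ℂ), φ (c • X) Y = c * φ X Y)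
    (hsymm : ∀ X Y : Matrix (Fin n) (Fin n) ℂ, φ Y X = starRingEnd ℂ (φ X Y))
    (hpos : ∀ X : Matrix (Fin n) (Fin n) ℂ, X ≠ 0 →
      (φ X X).im = 0 ∧ 0 < (φ X X).re) :
    ∃ (m : ℕ) (hm : 0 < m) (A B : Fin m → Matrix (Fin n) (Fin n) ℂ),
      (∀ i, (A i).PosDef) ∧ (∀ i, (B i).PosDef) ∧
      (∀ X Y : Matrix (Fin n) (Fin n) ℂ,
        φ X Y = Matrix.trace
          (-(Yᴴ * A ⟨0, hm⟩ * X * B ⟨0, hm⟩)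
            + ∑ i ∈ Finset.univ.erase ⟨0, hm⟩, Yᴴ * A i * X * B i)) := by

  have hadd2 : ∀ X Y Y', φ X (Y + Y') = φ X Y + φ X Y' := by
    intro X Y Y'
    rw [hsymm (Y + Y') X, hadd, map_add, ← hsymm, ← hsymm]
  have hsmul2 : ∀ c X Y, φ X (c • Y) = starRingEnd ℂ c * φ X Y := by
    intro c X Y
    rw [hsymm (c • Y) X, hsmul, map_mul, ← hsymm]
  have hzero : ∀ Y, φ 0 Y = 0 := fun Y => by simpa using hsmul 0 0 Y
  have hzero2 : ∀ X, φ X 0 = 0 := fun X => by simpa using hsmul2 0 X 0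
  have hsum1 : ∀ (s : Finset (Fin n × Fin n)) (f : Fin n × Fin n → Matrix (Fin n) (Fin n) ℂ) Y,
      φ (∑ p ∈ s, f p) Y = ∑ p ∈ s, φ (f p) Y := by
    intro s f Y
    induction s using Finset.induction_on with
    | empty => simp [hzero]
    | insert a s ha ih => rw [Finset.sum_insert ha, Finset.sum_insert ha, hadd, ih]
  have hsum2 : ∀ (s : Finset (Fin n × Fin n)) (f : Fin n × Fin n → Matrix (Fin n) (Fin n) ℂ) X,
      φ X (∑ p ∈ s, f p) = ∑ p ∈ s, φ X (f p) := by
    intro s f X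
    induction s using Finset.induction_on with
    | empty => simp [hzero2]
    | insert a s ha ih => rw [Finset.sum_insert ha, Finset.sum_insert ha, hadd2, ih]
  have hdec : ∀ X : Matrix (Fin n) (Fin n) ℂ,
      X = ∑ p : Fin n × Fin n, X p.1 p.2 • single p.1 p.2 (1 : ℂ) := by
    intro X
    conv_lhs => rw [matrix_eq_sum_single X]
    rw [Fintype.sum_prod_type]
    simp [smul_single]
  let g : (Fin n × Fin n) → (Fin n × Fin n) → ℂ :=
    fun p q => φ (single p.1 p.2 1) (single q.1 q.2 1)
  have hg : ∀ p q, star (g p q) = g q p := fun p q => (hsymm _ _).symm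
  have hφ : ∀ X Y, φ X Y = ∑ p : Fin n × Fin n, ∑ q : Fin n × Fin n,
      g p q * (X p.1 p.2 * star (Y q.1 q.2)) := by
    intro X Y
    conv_lhs => rw [hdec X, hdec Y]
    rw [hsum1]
    refine Finset.sum_congr rfl fun p _ => ?_
    rw [hsum2]
    refine Finset.sum_congr rfl fun q _ => ?_
    rw [hsmul, hsmul2]
    simp only [g, starRingEnd_apply]
    ring
  have good : GoodForm φ := by
    have := GoodForm.sum Finset.univ _ (fun p : Fin n × Fin n =>
      GoodForm.sum Finset.univ _ (fun q : Fin n × Fin n =>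
        GoodForm.pair (single q.1 p.1 (g p q / 2)) (single p.2 q.2 (1 : ℂ))))
    convert this using 1
    funext X Y
    simp only [conjTranspose_single, star_one, trace_single_form, Finset.sum_add_distrib]
    rw [hφ X Y]
    have hsw : ∑ p : Fin n × Fin n, ∑ q : Fin n × Fin n,
        star (g p q / 2) * (X q.1 q.2 * star (Y p.1 p.2)) =
        ∑ p : Fin n × Fin n, ∑ q : Fin n × Fin n,
        g p q / 2 * (X p.1 p.2 * star (Y q.1 q.2)) := by
      rw [Finset.sum_comm]
      refine Finset.sum_congr rfl fun p _ => Finset.sum_congr rfl fun q _ => ?_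
      rw [star_div₀, hg]
      simp
    rw [hsw, ← Finset.sum_add_distrib]
    refine Finset.sum_congr rfl fun p _ => ?_
    rw [← Finset.sum_add_distrib]
    refine Finset.sum_congr rfl fun q _ => ?_
    ring
  obtain ⟨c, hc, m, A, B, hA, hB, h⟩ := good
  have hcP : ((c : ℂ) • (1 : Matrix (Fin n) (Fin n) ℂ)).PosDef :=
    PosDef.one.smul (by exact_mod_cast hc)
  refine ⟨m + 1, Nat.succ_pos m, Fin.cons ((c : ℂ) • 1) A, Fin.cons 1 B, ?_, ?_, ?_⟩
  · intro i
    refine Fin.cases ?_ (fun i => ?_) i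
    · simpa using hcP
    · simpa using hA i
  · intro i
    refine Fin.cases ?_ (fun i => ?_) i
    · simpa using PosDef.one
    · simpa using hB i
  · intro X Y
    rw [Finset.sum_erase_eq_sub (Finset.mem_univ _), Fin.sum_univ_succ, h]
    have e0 : (⟨0, Nat.succ_pos m⟩ : Fin (m + 1)) = 0 := rfl
    simp only [e0, Fin.cons_zero, Fin.cons_succ, trace_add, trace_neg, trace_sub, trace_sum,
      Matrix.mul_smul, Matrix.smul_mul, trace_smul, Matrix.mul_one, smul_eq_mul]
    ring
end
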